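/- arXiv:1410.0068 — 2 statements merged into one kernel-verified Lean document; each statement's English description precedes it below -/
import Mathlib

section
/- Fix integers ℓ ≥ 0 and n ≥ ℓ+1 and a constant Z > 0. There exist constants C, δ > 0 such that for all h, R > 0 with h²/R < δ: |E_n(R) + Z²/(4n²h²) − T(h,R)| ≤ C·(h²/R)·T(h,R), where T(h,R) = [2^{2n+1}·h^{−4n−2}·R^{2n}/(n^{2n+3}·(n−ℓ−1)!·(n+ℓ)!)]·(Z/2)^{2n+2}·e^{−ZR/(n h²)}. -/
open MeasureTheory Set Filter

/-- `E` is a negative eigenvalue of the confined Coulomb Hamiltonian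
`H_R(ℓ;h) = h²D_y² + h²ℓ(ℓ+1)y⁻² − Z y⁻¹` on `(0,R)` with Dirichlet conditions:
some nonzero `u ∈ C²((0,R])` solves the eigenvalue equation on `(0,R)` with
`u → 0` at `0⁺` and `u(R) = 0`. -/
def IsEigCoulombConfined (Z : ℝ) (ℓ : ℕ) (h R E : ℝ) : Prop :=
  E < 0 ∧
  ∃ u : ℝ → ℝ, (∃ x ∈ Set.Ioc 0 R, u x ≠ 0) ∧ ContDiffOn ℝ 2 u (Set.Ioc 0 R) ∧
    Filter.Tendsto u (nhdsWithin 0 (Set.Ioi 0)) (nhds 0) ∧ u R = 0 ∧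
    ∀ x ∈ Set.Ioo 0 R,
      -(h ^ 2) * deriv (deriv u) x + h ^ 2 * ((ℓ : ℝ) * (ℓ + 1)) * (x ^ 2)⁻¹ * u x
        - Z * x⁻¹ * u x = E * u x

/-- `lam` is the `m`-th element of `S` in increasing order (counting from `m = 0`). -/
def IsNthEig (S : Set ℝ) (m : ℕ) (lam : ℝ) : Prop :=
  lam ∈ S ∧ {x ∈ S | x < lam}.Finite ∧ {x ∈ S | x < lam}.ncard = m

/-!
Write a negative energy as `E = -Z² / (4ν²h²)`. Up to a factor, the only solution of the radial
equation that vanishes at the origin is `y ^ (ℓ + 1) exp (-x / 2) M(ℓ + 1 - ν, 2ℓ + 2, x)` with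
`x = Z y / (ν h²)`: a second one would have a nonzero Wronskian with it and blow up at the origin.
So `E` is an eigenvalue iff `M(ℓ + 1 - ν, 2ℓ + 2, X / ν) = 0` with `X = Z R / h²`.

Put `ν = n + η` and `m = n - ℓ - 1`. In `(-1) ^ m M(-m - η, 2ℓ + 2, w)` all terms of degree above
`m` carry a factor `-η`, so the condition reads `P η = η Q η`, where `P` has size `w ^ m` and `Q`
has size `exp w / w ^ (2ℓ + 2 + m)`. For large `X` this has exactly one root with `|η| ≤ 1/2`,
namely `η ≈ P 0 / Q 0 ≈ z ^ (2n) exp (-z) / (m! (n + ℓ)!)` with `z = X / n`. There is none with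
`ν ≤ ℓ + 1`, where `M > 0`, so the root near `n` is the `m`-th one, and `dE/dν = Z² / (2n³h²)` at
`ν = n` gives the shift of the energy.
-/

section EGF

open scoped Nat

/-- The exponential generating function `∑ c k z ^ k / k!` of a sequence `c`. -/
noncomputable def egf (c : ℕ → ℝ) (z : ℝ) : ℝ := ∑' k, c k * (z ^ k / k !)

variable {c : ℕ → ℝ} {z : ℝ}

lemma egf_zero (c : ℕ → ℝ) : egf c 0 = c 0 := by
  rw [egf, tsum_eq_single 0 fun k hk => by simp [hk]]
  simp

lemma egf_const_mul (t : ℝ) (c : ℕ → ℝ) (z : ℝ) : egf (fun k => t * c k) z = t * egf c z := by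
  simp only [egf, mul_assoc]
  exact tsum_mul_left

lemma hasSum_pow_div_factorial (z : ℝ) : HasSum (fun k : ℕ => z ^ k / k !) (Real.exp z) := by
  rw [Real.exp_eq_exp_ℝ]
  exact NormedSpace.expSeries_div_hasSum_exp z

lemma cast_mul_pow_pred_div_factorial (k : ℕ) (z : ℝ) :
    ((k + 1 : ℕ) : ℝ) * z ^ (k + 1 - 1) / (k + 1)! = z ^ k / k ! := by
  rw [Nat.factorial_succ]
  push_cast
  field_simp

lemma summable_egf {K A : ℝ} (hc : ∀ k, |c k| ≤ K * A ^ k) (z : ℝ) :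
    Summable fun k => c k * (z ^ k / k !) := by
  refine .of_norm_bounded ((Real.summable_pow_div_factorial (A * |z|)).mul_left K) fun k => ?_
  rw [Real.norm_eq_abs, abs_mul, abs_div, abs_pow, Nat.abs_cast, mul_pow, mul_div_assoc,
    ← mul_assoc]
  gcongr
  exact hc k

lemma abs_succ_le_of_abs_le {K A : ℝ} (hc : ∀ k, |c k| ≤ K * A ^ k) (k : ℕ) :
    |c (k + 1)| ≤ K * A * A ^ k :=
  (hc (k + 1)).trans_eq (by ring)

lemma hasDerivAt_egf {K A : ℝ} (hc : ∀ k, |c k| ≤ K * A ^ k) (z : ℝ) :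
    HasDerivAt (egf c) (egf (fun k => c (k + 1)) z) z := by
  set ρ := |z| + 1
  have hρ : 0 < ρ := by positivity
  have derivBound_summable : Summable fun k : ℕ => |c k| * (k * ρ ^ (k - 1) / k !) := by
    rw [← summable_nat_add_iff 1]
    simp only [cast_mul_pow_pred_div_factorial]
    exact summable_egf (c := fun k => |c (k + 1)|)
      (fun k => by rw [abs_abs]; exact abs_succ_le_of_abs_le hc k) ρ
  have termwise : HasDerivAt (egf c) (∑' k : ℕ, c k * (k * z ^ (k - 1) / k !)) z := by
    refine hasDerivAt_tsum_of_isPreconnected (g := fun k z => c k * (z ^ k / k !))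
      (g' := fun k z => c k * (k * z ^ (k - 1) / k !)) (t := Metric.ball 0 ρ) (y₀ := 0)
      derivBound_summable Metric.isOpen_ball (convex_ball 0 ρ).isPreconnected
      (fun k y _ => ((hasDerivAt_pow k y).div_const _).const_mul _) (fun k y hy => ?_)
      (Metric.mem_ball_self hρ) (summable_egf hc 0)
      (mem_ball_zero_iff.2 (lt_add_one |z|))
    have hy : |y| ≤ ρ := (mem_ball_zero_iff.1 hy).le
    rw [Real.norm_eq_abs, abs_mul, abs_div, abs_mul, abs_pow, Nat.abs_cast, Nat.abs_cast]
    gcongr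
  have shift : ∑' k : ℕ, c k * (k * z ^ (k - 1) / k !) = egf (fun k => c (k + 1)) z := by
    rw [tsum_eq_zero_add' (by
      simpa only [cast_mul_pow_pred_div_factorial] using
        summable_egf (abs_succ_le_of_abs_le hc) z)]
    simp only [cast_mul_pow_pred_div_factorial, CharP.cast_eq_zero, zero_mul, zero_div, mul_zero,
      zero_add, egf]
  rwa [← shift]

lemma hasSum_mul_egf (hc : Summable fun k => c k * (z ^ k / k !)) :
    HasSum (fun k : ℕ => (k * c (k - 1)) * (z ^ k / k !)) (z * egf c z) := by
  rw [← hasSum_nat_add_iff' 1]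
  simp only [Finset.range_one, Finset.sum_singleton, CharP.cast_eq_zero, zero_mul, sub_zero]
  refine (hc.hasSum.mul_left z).congr_fun fun k => ?_
  rw [← cast_mul_pow_pred_div_factorial k z]
  simp only [add_tsub_cancel_right]
  ring

lemma hasSum_succ_mul_pow_div_factorial (z : ℝ) :
    HasSum (fun k : ℕ => ((k : ℝ) + 1) * (z ^ k / k !)) ((z + 1) * Real.exp z) := by
  have hexp := hasSum_pow_div_factorial z
  have hegf : egf (fun _ => 1) z = Real.exp z := by simpa [egf] using hexp.tsum_eq
  have hmul : HasSum (fun k : ℕ => (k * 1 : ℝ) * (z ^ k / k !)) (z * Real.exp z) := by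
    rw [← hegf]
    exact hasSum_mul_egf (by simpa using hexp.summable)
  rw [add_mul, one_mul]
  refine (hmul.add hexp).congr_fun fun k => ?_
  ring

lemma hasSum_pow_div_factorial_div_succ (hz : z ≠ 0) :
    HasSum (fun k : ℕ => z ^ k / k ! / (k + 1)) ((Real.exp z - 1) / z) := by
  have htail := (hasSum_nat_add_iff' 1).2 (hasSum_pow_div_factorial z)
  simp only [Finset.range_one, Finset.sum_singleton, pow_zero, Nat.factorial_zero, Nat.cast_one,
    div_one] at htail
  refine (htail.div_const z).congr_fun fun k => ?_
  rw [Nat.factorial_succ]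
  push_cast
  field_simp
  ring

-- The error is at most `D ∑ z ^ k / (k! (k + 1)) = D (exp z - 1) / z`.
lemma abs_egf_sub_exp_le {D : ℝ} (hc : ∀ k : ℕ, |c k - 1| ≤ D / (k + 1)) (hz : 0 < z) :
    |egf c z - Real.exp z| ≤ D * (Real.exp z / z) := by
  have hD : 0 ≤ D := by simpa using (abs_nonneg _).trans (hc 0)
  have hbound : ∀ k : ℕ, ‖(c k - 1) * (z ^ k / k !)‖ ≤ D * (z ^ k / k ! / (k + 1)) := by
    intro k
    rw [Real.norm_eq_abs, abs_mul, abs_of_pos (show 0 < z ^ k / (k ! : ℝ) by positivity)]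
    calc |c k - 1| * (z ^ k / k !) ≤ D / (k + 1) * (z ^ k / k !) := by gcongr; exact hc k
      _ = D * (z ^ k / k ! / (k + 1)) := by ring
  have hmajorant := (hasSum_pow_div_factorial_div_succ hz.ne').mul_left D
  have hdiff : HasSum (fun k => (c k - 1) * (z ^ k / k !)) (egf c z - Real.exp z) := by
    have hexp := hasSum_pow_div_factorial z
    have hs : Summable fun k => c k * (z ^ k / k !) := by
      refine ((hmajorant.summable.of_norm_bounded hbound).add hexp.summable).congr fun k => ?_
      ring
    exact (hs.hasSum.sub hexp).congr_fun fun k => by ring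
  calc |egf c z - Real.exp z| ≤ D * ((Real.exp z - 1) / z) := by
        rw [← hdiff.tsum_eq]; exact tsum_of_norm_bounded hmajorant hbound
    _ ≤ D * (Real.exp z / z) := by gcongr; linarith

lemma abs_tsum_shifted_le {N : ℕ} {L : ℝ} (hc : ∀ i : ℕ, |c i| ≤ L * ((i + N : ℕ) + 1))
    (hz : 0 ≤ z) :
    (Summable fun i => c i * (z ^ (i + N) / (i + N)!)) ∧
      |∑' i, c i * (z ^ (i + N) / (i + N)!)| ≤ L * ((z + 1) * Real.exp z) := by
  have hL : 0 ≤ L := nonneg_of_mul_nonneg_left ((abs_nonneg _).trans (hc 0)) (by positivity)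
  have hmajorant := (hasSum_succ_mul_pow_div_factorial z).mul_left L
  have hshift : Summable fun i : ℕ => L * (((i + N : ℕ) + 1) * (z ^ (i + N) / (i + N)!)) :=
    (summable_nat_add_iff (f := fun k : ℕ => L * (((k : ℝ) + 1) * (z ^ k / k !))) N).2
      hmajorant.summable
  have hbound : ∀ i, ‖c i * (z ^ (i + N) / (i + N)!)‖ ≤
      L * (((i + N : ℕ) + 1) * (z ^ (i + N) / (i + N)!)) := by
    intro i
    have hpos : 0 ≤ z ^ (i + N) / ((i + N)! : ℝ) := by positivity
    rw [Real.norm_eq_abs, abs_mul, abs_of_nonneg hpos, ← mul_assoc]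
    exact mul_le_mul_of_nonneg_right (hc i) hpos
  refine ⟨hshift.of_norm_bounded hbound, (tsum_of_norm_bounded hshift.hasSum hbound).trans ?_⟩
  rw [← hmajorant.tsum_eq, ← hmajorant.summable.sum_add_tsum_nat_add N]
  exact le_add_of_nonneg_left (Finset.sum_nonneg fun k _ => by positivity)

lemma egf_ite_lt (ρ : ℕ → ℝ) (s : ℕ) (z : ℝ) :
    egf (fun k => if k < s then 0 else ρ (k - s)) z = ∑' i, ρ i * (z ^ (i + s) / (i + s)!) := by
  have hsupport : (Function.support fun k => (if k < s then 0 else ρ (k - s)) * (z ^ k / k !))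
      ⊆ range (· + s) := fun k hk => by
    have hks : ¬ k < s := fun hlt => hk (by simp [hlt])
    exact ⟨k - s, Nat.sub_add_cancel (not_lt.1 hks)⟩
  rw [egf, ← (add_left_injective s).tsum_eq hsupport]
  simp

lemma abs_tsum_shifted_sub_exp_le {ρ : ℕ → ℝ} {D : ℝ} (hρ : ∀ i : ℕ, |ρ i - 1| ≤ D / (i + 1))
    (s : ℕ) (hz : 0 < z) :
    |∑' i, ρ i * (z ^ (i + s) / (i + s)!) - Real.exp z|
      ≤ (D * (s + 1) + s) * (Real.exp z / z) := by
  have hD : 0 ≤ D := by simpa using (abs_nonneg _).trans (hρ 0)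
  rw [← egf_ite_lt]
  refine abs_egf_sub_exp_le (fun k => ?_) hz
  rcases lt_or_ge k s with hks | hsk
  · have hks' : (k : ℝ) + 1 ≤ s := mod_cast hks
    rw [if_pos hks, zero_sub, abs_neg, abs_one, le_div_iff₀ (by positivity)]
    nlinarith [mul_nonneg hD (Nat.cast_nonneg s : (0 : ℝ) ≤ s)]
  · obtain ⟨i, rfl⟩ := Nat.exists_eq_add_of_le' hsk
    rw [if_neg (by omega), Nat.add_sub_cancel]
    refine (hρ i).trans ?_
    rw [div_le_div_iff₀ (by positivity) (by positivity)]
    have hDsi : 0 ≤ D * s * i := by positivity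
    have hsi : 0 ≤ (s : ℝ) * (i + 1) := by positivity
    push_cast
    linarith

end EGF

section Kummer

open scoped Nat

/-- The ratio `(a)ₖ / (b)ₖ` of rising factorials. -/
noncomputable def kummerCoeff (a b : ℝ) (k : ℕ) : ℝ := ∏ j ∈ Finset.range k, (a + j) / (b + j)

/-- Kummer's confluent hypergeometric function `M(a, b, z) = ₁F₁(a; b; z)`. -/
noncomputable def kummerM (a b z : ℝ) : ℝ := egf (kummerCoeff a b) z

variable {b : ℝ}

lemma kummerCoeff_succ (a b : ℝ) (k : ℕ) :
    kummerCoeff a b (k + 1) = kummerCoeff a b k * ((a + k) / (b + k)) :=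
  Finset.prod_range_succ _ _

lemma kummerCoeff_succ_eq_mul_contiguous (a b : ℝ) (k : ℕ) :
    kummerCoeff a b (k + 1) = a / b * kummerCoeff (a + 1) (b + 1) k := by
  rw [kummerCoeff, kummerCoeff, Finset.prod_range_succ', mul_comm]
  simp only [Nat.cast_zero, add_zero]
  congr 1
  refine Finset.prod_congr rfl fun j _ => ?_
  push_cast
  ring_nf

lemma kummerCoeff_recurrence (hb : 0 < b) (a : ℝ) (k : ℕ) :
    (b + k) * kummerCoeff a b (k + 1) = (a + k) * kummerCoeff a b k := by
  rw [kummerCoeff_succ]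
  have : b + k ≠ 0 := by positivity
  field_simp

lemma abs_kummerCoeff_le (hb : 0 < b) (a : ℝ) (k : ℕ) :
    |kummerCoeff a b k| ≤ 1 * (|a| / b + 1) ^ k := by
  rw [one_mul, kummerCoeff, Finset.abs_prod, ← Finset.card_range k, ← Finset.prod_const,
    Finset.card_range]
  refine Finset.prod_le_prod (fun _ _ => abs_nonneg _) fun j _ => ?_
  have hbj : 0 < b + j := by positivity
  calc |(a + j) / (b + j)| = |a + j| / (b + j) := by rw [abs_div, abs_of_pos hbj]
    _ ≤ (|a| + j) / (b + j) := by
        gcongr; exact (abs_add_le _ _).trans_eq (by rw [Nat.abs_cast])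
    _ = |a| / (b + j) + j / (b + j) := add_div _ _ _
    _ ≤ |a| / b + 1 := by
        gcongr
        · exact le_add_of_nonneg_right (Nat.cast_nonneg j)
        · exact (div_le_one hbj).2 (le_add_of_nonneg_left hb.le)

lemma summable_kummerM (hb : 0 < b) (a z : ℝ) :
    Summable fun k => kummerCoeff a b k * (z ^ k / k !) :=
  summable_egf (abs_kummerCoeff_le hb a) z

lemma kummerM_apply_zero (a b : ℝ) : kummerM a b 0 = 1 := by
  rw [kummerM, egf_zero, kummerCoeff, Finset.prod_range_zero]

lemma kummerM_pos_of_nonneg {a w : ℝ} (ha : 0 ≤ a) (hb : 0 < b) (hw : 0 ≤ w) :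
    0 < kummerM a b w := by
  have hnonneg : ∀ k, 0 ≤ kummerCoeff a b k := fun k => Finset.prod_nonneg fun j _ => by positivity
  calc (0 : ℝ) < kummerCoeff a b 0 * (w ^ 0 / 0 !) := by simp [kummerCoeff]
    _ ≤ kummerM a b w := (summable_kummerM hb a w).le_tsum 0 fun k _ =>
        mul_nonneg (hnonneg k) (by positivity)

lemma egf_kummerCoeff_succ (a b z : ℝ) :
    egf (fun k => kummerCoeff a b (k + 1)) z = a / b * kummerM (a + 1) (b + 1) z := by
  simp only [kummerCoeff_succ_eq_mul_contiguous a b]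
  exact egf_const_mul _ _ _

lemma hasDerivAt_kummerM (hb : 0 < b) (a z : ℝ) :
    HasDerivAt (kummerM a b) (a / b * kummerM (a + 1) (b + 1) z) z := by
  rw [← egf_kummerCoeff_succ]
  exact hasDerivAt_egf (abs_kummerCoeff_le hb a) z

lemma deriv_kummerM (hb : 0 < b) (a : ℝ) :
    deriv (kummerM a b) = fun z => a / b * kummerM (a + 1) (b + 1) z :=
  funext fun z => (hasDerivAt_kummerM hb a z).deriv

lemma contDiff_kummerM (hb : 0 < b) (a : ℝ) (n : ℕ) : ContDiff ℝ n (kummerM a b) := by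
  induction n generalizing a b with
  | zero =>
    exact contDiff_zero.2 (continuous_iff_continuousAt.2 fun z =>
      (hasDerivAt_kummerM hb a z).continuousAt)
  | succ n ih =>
    push_cast
    refine contDiff_succ_iff_deriv.2
      ⟨fun z => (hasDerivAt_kummerM hb a z).differentiableAt, by simp, ?_⟩
    rw [deriv_kummerM hb a]
    exact contDiff_const.mul (ih (by positivity) (a + 1))

lemma kummer_differential_equation (hb : 0 < b) (a z : ℝ) :
    z * deriv (deriv (kummerM a b)) z + (b - z) * deriv (kummerM a b) z = a * kummerM a b z := by
  have bound1 := abs_succ_le_of_abs_le (abs_kummerCoeff_le hb a)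
  have bound2 := abs_succ_le_of_abs_le bound1
  have deriv1 : deriv (kummerM a b) = egf fun k => kummerCoeff a b (k + 1) :=
    funext fun y => (hasDerivAt_egf (abs_kummerCoeff_le hb a) y).deriv
  rw [deriv1, (hasDerivAt_egf bound1 z).deriv, sub_mul]
  have coeffwise := ((hasSum_mul_egf (summable_egf bound2 z)).add
    (((summable_egf bound1 z).hasSum.mul_left b).sub (hasSum_mul_egf (summable_egf bound1 z))))
  refine coeffwise.unique (((summable_kummerM hb a z).hasSum.mul_left a).congr_fun fun k => ?_)
  have recurrence := kummerCoeff_recurrence hb a k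
  rcases k with _ | k
  · simp only [CharP.cast_eq_zero, zero_add, add_zero] at recurrence ⊢
    linear_combination recurrence * (z ^ 0 / (0 ! : ℝ))
  · simp only [add_tsub_cancel_right]
    push_cast at recurrence ⊢
    linear_combination recurrence * (z ^ (k + 1) / ((k + 1)! : ℝ))

end Kummer

section SecondOrderODE

open scoped Topology
open Asymptotics

/-- The pair `(u, u')` solves the linear second-order equation `u'' = q u` on `s`, as a first-order
system. -/
structure SolvesODE (q u u' : ℝ → ℝ) (s : Set ℝ) : Prop where
  hasDerivAt : ∀ x ∈ s, HasDerivAt u (u' x) x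
  hasDerivAt_deriv : ∀ x ∈ s, HasDerivAt u' (q x * u x) x

variable {q u u' f f' : ℝ → ℝ} {s t : Set ℝ} {a b w l : ℝ}

lemma SolvesODE.mono (hu : SolvesODE q u u' s) (hts : t ⊆ s) : SolvesODE q u u' t :=
  ⟨fun x hx => hu.hasDerivAt x (hts hx), fun x hx => hu.hasDerivAt_deriv x (hts hx)⟩

lemma SolvesODE.neg (hu : SolvesODE q u u' s) :
    SolvesODE q (fun x => -u x) (fun x => -u' x) s :=
  ⟨fun x hx => (hu.hasDerivAt x hx).neg,
    fun x hx => (hu.hasDerivAt_deriv x hx).neg.congr_deriv (by ring)⟩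

lemma SolvesODE.sub_const_mul (hu : SolvesODE q u u' s) (hf : SolvesODE q f f' s) (c : ℝ) :
    SolvesODE q (fun x => u x - c * f x) (fun x => u' x - c * f' x) s :=
  ⟨fun x hx => (hu.hasDerivAt x hx).sub ((hf.hasDerivAt x hx).const_mul c),
    fun x hx => ((hu.hasDerivAt_deriv x hx).sub
      ((hf.hasDerivAt_deriv x hx).const_mul c)).congr_deriv (by ring)⟩

lemma SolvesODE.exists_wronskian_eq (hu : SolvesODE q u u' s) (hf : SolvesODE q f f' s)
    (hs : IsOpen s) (hs' : IsPreconnected s) : ∃ w, ∀ x ∈ s, u x * f' x - u' x * f x = w := by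
  have deriv_zero : ∀ x ∈ s, HasDerivAt (fun x => u x * f' x - u' x * f x) 0 x := fun x hx =>
    (((hu.hasDerivAt x hx).mul (hf.hasDerivAt_deriv x hx)).sub
      ((hu.hasDerivAt_deriv x hx).mul (hf.hasDerivAt x hx))).congr_deriv (by ring)
  exact hs.exists_is_const_of_deriv_eq_zero hs'
    (fun x hx => (deriv_zero x hx).differentiableAt.differentiableWithinAt)
    (fun x hx => (deriv_zero x hx).deriv)

lemma lipschitzWith_phaseField {c C : ℝ} (hc : |c| ≤ C) :
    LipschitzWith (Real.toNNReal (max 1 C)) fun p : ℝ × ℝ => (p.2, c * p.1) := by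
  refine LipschitzWith.of_dist_le_mul fun p p' => ?_
  rw [Real.coe_toNNReal _ (by positivity), Prod.dist_eq, Prod.dist_eq]
  refine max_le ?_ ?_
  · calc dist p.2 p'.2 = 1 * dist p.2 p'.2 := (one_mul _).symm
      _ ≤ max 1 C * max (dist p.1 p'.1) (dist p.2 p'.2) := by
        gcongr
        exacts [le_max_left _ _, le_max_right _ _]
  · calc dist (c * p.1) (c * p'.1) = |c| * dist p.1 p'.1 := by
          rw [Real.dist_eq, Real.dist_eq, ← mul_sub, abs_mul]
      _ ≤ max 1 C * max (dist p.1 p'.1) (dist p.2 p'.2) := by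
        gcongr
        exacts [hc.trans (le_max_right _ _), le_max_left _ _]

lemma SolvesODE.eq_zero_of_initial (hu : SolvesODE q u u' (Ioo a b))
    (hq : ContinuousOn q (Ioo a b)) {t x : ℝ} (ht : t ∈ Ioo a b) (hut : u t = 0)
    (hut' : u' t = 0) (hx : x ∈ Ioo a b) : u x = 0 := by
  obtain ⟨c, hac, hc⟩ := exists_between (lt_min ht.1 hx.1)
  obtain ⟨d, hd, hdb⟩ := exists_between (max_lt ht.2 hx.2)
  have hcd : Icc c d ⊆ Ioo a b := fun y hy => ⟨hac.trans_le hy.1, hy.2.trans_lt hdb⟩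
  obtain ⟨C, hC⟩ := isCompact_Icc.exists_bound_of_continuousOn (hq.mono hcd)
  have phase_eq_zero : EqOn (fun y => (u y, u' y)) (fun _ => (0, 0)) (Ioo c d) := by
    refine ODE_solution_unique_of_mem_Ioo (v := fun y p => (p.2, q y * p.1)) (s := fun _ => univ)
      (K := Real.toNNReal (max 1 C)) (t₀ := t)
      (fun y hy => (lipschitzWith_phaseField (hC y (Ioo_subset_Icc_self hy))).lipschitzOnWith)
      ⟨hc.trans_le (min_le_left _ _), (le_max_left _ _).trans_lt hd⟩
      (fun y hy => ?_) (fun y _ => ⟨?_, mem_univ _⟩) (by simp [hut, hut'])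
    · have hy := hcd (Ioo_subset_Icc_self hy)
      exact ⟨(hu.hasDerivAt y hy).prodMk (hu.hasDerivAt_deriv y hy), mem_univ _⟩
    · exact (hasDerivAt_const y ((0 : ℝ), (0 : ℝ))).congr_deriv (by simp [Prod.zero_eq_mk])
  exact congrArg Prod.fst
    (phase_eq_zero ⟨hc.trans_le (min_le_right _ _), (le_max_right _ _).trans_lt hd⟩)

lemma tendsto_atTop_of_deriv_le_neg_const_div {c : ℝ} (hc : 0 < c)
    (hu : ∀ᶠ x in 𝓝[>] 0, HasDerivAt u (u' x) x) (hu' : ∀ᶠ x in 𝓝[>] 0, u' x ≤ -(c / x)) :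
    Tendsto u (𝓝[>] 0) atTop := by
  obtain ⟨ε, hε, hsub⟩ := mem_nhdsGT_iff_exists_Ioo_subset.1 (hu.and hu')
  rw [mem_Ioi] at hε
  have hderiv : ∀ x ∈ Ioo 0 ε,
      HasDerivAt (fun y => u y + c * Real.log y) (u' x + c * x⁻¹) x := fun x hx =>
    (hsub hx).1.add ((Real.hasDerivAt_log hx.1.ne').const_mul c)
  have hanti : AntitoneOn (fun y => u y + c * Real.log y) (Ioo 0 ε) := by
    refine antitoneOn_of_deriv_nonpos (convex_Ioo _ _)
      (fun x hx => (hderiv x hx).continuousAt.continuousWithinAt) ?_ ?_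
    all_goals
      intro x hx
      rw [interior_Ioo] at hx
    · exact (hderiv x hx).differentiableAt.differentiableWithinAt
    · rw [(hderiv x hx).deriv, ← div_eq_mul_inv]
      linarith [(hsub hx).2]
  have hmid : ε / 2 ∈ Ioo 0 ε := ⟨by linarith, by linarith⟩
  refine tendsto_atTop_mono' _ ?_ (tendsto_atTop_add_const_left _
    (u (ε / 2) + c * Real.log (ε / 2))
    (tendsto_neg_atBot_atTop.comp (Real.tendsto_log_nhdsGT_zero.const_mul_atBot hc)))
  filter_upwards [Ioo_mem_nhdsGT hmid.1] with x hx
  have := hanti ⟨hx.1, hx.2.trans hmid.2⟩ hmid hx.2.le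
  simp only [Function.comp_apply] at this ⊢
  linarith

-- A positive Wronskian forces `u' ≤ -c / x` near `0`, so `u` would blow up logarithmically.
lemma SolvesODE.wronskian_nonpos (hu : SolvesODE q u u' (Ioo 0 b)) (hb : 0 < b)
    (hu0 : Tendsto u (𝓝[>] 0) (𝓝 0)) (hfpos : ∀ᶠ x in 𝓝[>] 0, 0 < f x)
    (hf : f =O[𝓝[>] 0] fun x => x) (hf' : Tendsto f' (𝓝[>] 0) (𝓝 l))
    (hw : ∀ x ∈ Ioo 0 b, u x * f' x - u' x * f x = w) : w ≤ 0 := by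
  by_contra! hwpos
  obtain ⟨K, hK, hfK⟩ := hf.exists_pos
  have hsmall : ∀ᶠ x in 𝓝[>] 0, u x * f' x < w / 2 :=
    (hu0.mul hf').eventually_lt_const (by rw [zero_mul]; positivity)
  have hIoo : ∀ᶠ x in 𝓝[>] 0, x ∈ Ioo 0 b := Ioo_mem_nhdsGT hb
  refine not_tendsto_nhds_of_tendsto_atTop (tendsto_atTop_of_deriv_le_neg_const_div (u' := u')
    (show 0 < w / (2 * K) by positivity) (hIoo.mono hu.hasDerivAt) ?_) 0 hu0
  filter_upwards [hsmall, hIoo, hfpos, hfK.bound] with x hx hxb hfx hfxK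
  have hx0 : 0 < x := hxb.1
  rw [Real.norm_of_nonneg hfx.le, Real.norm_of_nonneg hx0.le] at hfxK
  have huf : u' x * f x ≤ -(w / 2) := by linarith [hw x hxb]
  have hu'neg : u' x < 0 := by
    by_contra! hnonneg
    linarith [mul_nonneg hnonneg hfx.le]
  calc u' x = u' x * (K * x) / (K * x) := by field_simp
    _ ≤ -(w / 2) / (K * x) := by
        gcongr
        exact (mul_le_mul_of_nonpos_left hfxK hu'neg.le).trans huf
    _ = -(w / (2 * K) / x) := by field_simp

lemma SolvesODE.exists_eq_const_mul (hu : SolvesODE q u u' (Ioo 0 b))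
    (hf : SolvesODE q f f' (Ioo 0 b)) (hq : ContinuousOn q (Ioo 0 b)) (hb : 0 < b)
    (hu0 : Tendsto u (𝓝[>] 0) (𝓝 0)) (hfpos : ∀ᶠ x in 𝓝[>] 0, 0 < f x)
    (hfO : f =O[𝓝[>] 0] fun x => x) (hf' : Tendsto f' (𝓝[>] 0) (𝓝 l)) :
    ∃ c, ∀ x ∈ Ioo 0 b, u x = c * f x := by
  obtain ⟨w, hw⟩ := hu.exists_wronskian_eq hf isOpen_Ioo isPreconnected_Ioo
  have hw_nonpos : w ≤ 0 := hu.wronskian_nonpos hb hu0 hfpos hfO hf' hw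
  have hw_nonneg : -w ≤ 0 := hu.neg.wronskian_nonpos hb (by simpa using hu0.neg) hfpos hfO hf'
    fun x hx => by rw [← hw x hx]; ring
  obtain ⟨t, hft, ht⟩ := (hfpos.and (Ioo_mem_nhdsGT hb)).exists
  refine ⟨u t / f t, fun x hx => sub_eq_zero.1 ?_⟩
  refine (hu.sub_const_mul hf (u t / f t)).eq_zero_of_initial hq ht ?_ ?_ hx
  · field_simp
    ring
  · field_simp
    linarith [hw t ht]

lemma SolvesODE.regular_solution_eq_zero (hu : SolvesODE q u u' (Ioo 0 b))
    (hf : SolvesODE q f f' (Ioi 0)) (hq : ContinuousOn q (Ioi 0)) (hb : 0 < b)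
    (hu0 : Tendsto u (𝓝[>] 0) (𝓝 0)) (hfpos : ∀ᶠ x in 𝓝[>] 0, 0 < f x)
    (hfO : f =O[𝓝[>] 0] fun x => x) (hf' : Tendsto f' (𝓝[>] 0) (𝓝 l))
    (hub : u b = 0) (huc : ContinuousWithinAt u (Ioc 0 b) b) (hne : ∃ x ∈ Ioc 0 b, u x ≠ 0) :
    f b = 0 := by
  have hsub : Ioo 0 b ⊆ Ioi 0 := fun x hx => hx.1
  obtain ⟨c, hc⟩ := hu.exists_eq_const_mul (hf.mono hsub) (hq.mono hsub) hb hu0 hfpos hfO hf'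
  have hlim_u : Tendsto u (𝓝[Ioo 0 b] b) (𝓝 0) := by
    simpa only [ContinuousWithinAt, hub] using huc.mono Ioo_subset_Ioc_self
  have hlim_f : Tendsto (fun x => c * f x) (𝓝[Ioo 0 b] b) (𝓝 (c * f b)) :=
    ((hf.hasDerivAt b hb).continuousAt.tendsto.mono_left nhdsWithin_le_nhds).const_mul c
  have : (𝓝[Ioo 0 b] b).NeBot := right_nhdsWithin_Ioo_neBot hb
  have hcf : c * f b = 0 := tendsto_nhds_unique
    (hlim_f.congr' (eventually_nhdsWithin_of_forall fun x hx => (hc x hx).symm)) hlim_u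
  refine (mul_eq_zero.1 hcf).resolve_left fun hc0 => ?_
  obtain ⟨x, hx, hux⟩ := hne
  rcases hx.2.lt_or_eq with hlt | rfl
  · exact hux (by rw [hc x ⟨hx.1, hlt⟩, hc0, zero_mul])
  · exact hux hub

end SecondOrderODE

section Coulomb

open scoped Topology
open Asymptotics

/-- The potential of the radial Coulomb equation `u'' = q u` at energy `-κ²`, in units where the
attraction is `2κν / y`. -/
noncomputable def coulombPotential (ℓ : ℕ) (κ ν y : ℝ) : ℝ :=
  ℓ * (ℓ + 1) * (y ^ 2)⁻¹ - 2 * κ * ν * y⁻¹ + κ ^ 2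

/-- The solution of the radial Coulomb equation that is regular at the origin. -/
noncomputable def regularCoulomb (ℓ : ℕ) (κ ν y : ℝ) : ℝ :=
  y ^ (ℓ + 1) * Real.exp (-κ * y) * kummerM (ℓ + 1 - ν) (2 * ℓ + 2) (2 * κ * y)

/-- The energy `-Z² / (4ν²h²)` of effective principal quantum number `ν`. -/
noncomputable def coulombEnergy (Z h ν : ℝ) : ℝ := -(Z ^ 2 / (4 * ν ^ 2 * h ^ 2))

/-- `ν` is the effective principal quantum number of an eigenstate confined to `(0, R)`, where
`X = ZR/h²` is the dimensionless confinement radius. -/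
def IsEffectiveQuantumNumber (ℓ : ℕ) (X ν : ℝ) : Prop :=
  kummerM (ℓ + 1 - ν) (2 * ℓ + 2) (X / ν) = 0

variable {Z h R ν : ℝ}

lemma continuousOn_coulombPotential (ℓ : ℕ) (κ ν : ℝ) :
    ContinuousOn (coulombPotential ℓ κ ν) (Ioi 0) := by
  intro y hy
  have hy0 : y ≠ 0 := (mem_Ioi.1 hy).ne'
  unfold coulombPotential
  fun_prop (disch := simp [hy0])

lemma contDiff_regularCoulomb (ℓ : ℕ) (κ ν : ℝ) : ContDiff ℝ 2 (regularCoulomb ℓ κ ν) := by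
  have hM := contDiff_kummerM (show (0 : ℝ) < 2 * ℓ + 2 by positivity) (ℓ + 1 - ν) 2
  have hM' : ContDiff ℝ 2 fun y => kummerM (ℓ + 1 - ν) (2 * ℓ + 2) (2 * κ * y) :=
    hM.comp (contDiff_const.mul contDiff_id)
  unfold regularCoulomb
  fun_prop

lemma cast_mul_pow_pred (ℓ : ℕ) {y : ℝ} (hy : y ≠ 0) :
    (ℓ : ℝ) * y ^ (ℓ - 1) = ℓ * y ^ ℓ * y⁻¹ := by
  rcases ℓ with _ | ℓ
  · simp
  · rw [add_tsub_cancel_right, pow_succ]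
    field_simp

lemma hasDerivAt_exp_neg_mul (κ y : ℝ) :
    HasDerivAt (fun y => Real.exp (-κ * y)) (Real.exp (-κ * y) * -κ) y := by
  simpa using ((hasDerivAt_id y).const_mul (-κ)).exp

lemma hasDerivAt_comp_const_mul {g : ℝ → ℝ} (hg : Differentiable ℝ g) (t y : ℝ) :
    HasDerivAt (fun y => g (t * y)) (deriv g (t * y) * t) y :=
  ((hg (t * y)).hasDerivAt.comp y ((hasDerivAt_id y).const_mul t)).congr_deriv (by simp)

lemma deriv_regularCoulomb (ℓ : ℕ) (κ ν : ℝ) :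
    deriv (regularCoulomb ℓ κ ν) = fun y =>
      (((ℓ + 1 : ℕ) : ℝ) * y ^ ℓ * Real.exp (-κ * y) + y ^ (ℓ + 1) * (Real.exp (-κ * y) * -κ)) *
          kummerM (ℓ + 1 - ν) (2 * ℓ + 2) (2 * κ * y) +
        y ^ (ℓ + 1) * Real.exp (-κ * y) *
          (deriv (kummerM (ℓ + 1 - ν) (2 * ℓ + 2)) (2 * κ * y) * (2 * κ)) := by
  have hM := (contDiff_kummerM (show (0 : ℝ) < 2 * ℓ + 2 by positivity)
    (ℓ + 1 - ν) 1).differentiable (by simp)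
  exact funext fun y => (((hasDerivAt_pow (ℓ + 1) y).mul (hasDerivAt_exp_neg_mul κ y)).mul
    (hasDerivAt_comp_const_mul hM (2 * κ) y)).deriv

lemma hasDerivAt_deriv_regularCoulomb (ℓ : ℕ) (κ ν : ℝ) {y : ℝ} (hy : y ≠ 0) :
    HasDerivAt (deriv (regularCoulomb ℓ κ ν))
      (coulombPotential ℓ κ ν y * regularCoulomb ℓ κ ν y) y := by
  have hb : (0 : ℝ) < 2 * ℓ + 2 := by positivity
  have hMsmooth : ContDiff ℝ (1 + 1) (kummerM (ℓ + 1 - ν) (2 * ℓ + 2)) :=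
    contDiff_kummerM hb (ℓ + 1 - ν) 2
  have hM := hasDerivAt_comp_const_mul (hMsmooth.differentiable (by simp)) (2 * κ) y
  have hM' := hasDerivAt_comp_const_mul
    ((contDiff_succ_iff_deriv.1 hMsmooth).2.2.differentiable (by simp)) (2 * κ) y
  have hE := hasDerivAt_exp_neg_mul κ y
  have hpow := hasDerivAt_pow (ℓ + 1) y
  have kummer := kummer_differential_equation hb (ℓ + 1 - ν) (2 * κ * y)
  rw [deriv_regularCoulomb]
  refine ((((((hasDerivAt_pow ℓ y).const_mul ((ℓ + 1 : ℕ) : ℝ)).mul hE).add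
    (hpow.mul (hE.mul_const (-κ)))).mul hM).add
    ((hpow.mul hE).mul (hM'.mul_const (2 * κ)))).congr_deriv ?_
  simp only [Pi.mul_apply, Pi.add_apply, add_tsub_cancel_right]
  rw [cast_mul_pow_pred ℓ hy, regularCoulomb, coulombPotential]
  generalize deriv (deriv (kummerM (ℓ + 1 - ν) (2 * ℓ + 2))) (2 * κ * y) = M'' at kummer ⊢
  generalize deriv (kummerM (ℓ + 1 - ν) (2 * ℓ + 2)) (2 * κ * y) = M' at kummer ⊢
  generalize kummerM (ℓ + 1 - ν) (2 * ℓ + 2) (2 * κ * y) = M at kummer ⊢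
  push_cast
  rw [pow_succ]
  field_simp
  linear_combination (2 * κ * y) * kummer

lemma solvesODE_regularCoulomb (ℓ : ℕ) (κ ν : ℝ) :
    SolvesODE (coulombPotential ℓ κ ν) (regularCoulomb ℓ κ ν) (deriv (regularCoulomb ℓ κ ν))
      (Ioi 0) :=
  ⟨fun y _ => ((contDiff_regularCoulomb ℓ κ ν).differentiable (by simp) y).hasDerivAt,
    fun _ hy => hasDerivAt_deriv_regularCoulomb ℓ κ ν (mem_Ioi.1 hy).ne'⟩

lemma eventually_regularCoulomb_pos (ℓ : ℕ) (κ ν : ℝ) :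
    ∀ᶠ y in 𝓝[>] 0, 0 < regularCoulomb ℓ κ ν y := by
  have hM : ContinuousAt (fun y => kummerM (ℓ + 1 - ν) (2 * ℓ + 2) (2 * κ * y)) 0 :=
    ((contDiff_kummerM (by positivity) (ℓ + 1 - ν) 0).continuous.comp
      (continuous_const.mul continuous_id)).continuousAt
  have hMpos : ∀ᶠ y in 𝓝 0, 0 < kummerM (ℓ + 1 - ν) (2 * ℓ + 2) (2 * κ * y) :=
    hM.eventually_const_lt (by simp [kummerM_apply_zero])
  filter_upwards [hMpos.filter_mono nhdsWithin_le_nhds, self_mem_nhdsWithin] with y hy hy0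
  have : 0 < y := hy0
  unfold regularCoulomb
  positivity

lemma regularCoulomb_zero (ℓ : ℕ) (κ ν : ℝ) : regularCoulomb ℓ κ ν 0 = 0 := by
  simp [regularCoulomb]

lemma regularCoulomb_isBigO_id (ℓ : ℕ) (κ ν : ℝ) :
    regularCoulomb ℓ κ ν =O[𝓝[>] 0] fun y => y := by
  have hdiff := ((contDiff_regularCoulomb ℓ κ ν).differentiable (by simp) 0).isBigO_sub
  simpa only [regularCoulomb_zero, sub_zero] using hdiff.mono nhdsWithin_le_nhds

lemma regularCoulomb_eq_zero_iff (ℓ : ℕ) (κ ν : ℝ) {y : ℝ} (hy : y ≠ 0) :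
    regularCoulomb ℓ κ ν y = 0 ↔ kummerM (ℓ + 1 - ν) (2 * ℓ + 2) (2 * κ * y) = 0 :=
  mul_eq_zero_iff_left (mul_ne_zero (pow_ne_zero _ hy) (Real.exp_pos _).ne')

lemma radial_equation_iff (Z : ℝ) (ℓ : ℕ) (hh : h ≠ 0) (hν : ν ≠ 0) {y : ℝ} (hy : y ≠ 0)
    (U U'' : ℝ) :
    -(h ^ 2) * U'' + h ^ 2 * ((ℓ : ℝ) * (ℓ + 1)) * (y ^ 2)⁻¹ * U - Z * y⁻¹ * U =
        coulombEnergy Z h ν * U ↔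
      U'' = coulombPotential ℓ (Z / (2 * ν * h ^ 2)) ν y * U := by
  have hscale : -(h ^ 2) * U'' + h ^ 2 * ((ℓ : ℝ) * (ℓ + 1)) * (y ^ 2)⁻¹ * U - Z * y⁻¹ * U -
      coulombEnergy Z h ν * U =
        h ^ 2 * (coulombPotential ℓ (Z / (2 * ν * h ^ 2)) ν y * U - U'') := by
    rw [coulombEnergy, coulombPotential]
    field_simp
    ring
  rw [← sub_eq_zero, hscale, mul_eq_zero_iff_left (pow_ne_zero 2 hh), sub_eq_zero, eq_comm]

lemma solvesODE_of_contDiffOn {q u : ℝ → ℝ} {s : Set ℝ} (hs : IsOpen s) (hu : ContDiffOn ℝ 2 u s)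
    (hode : ∀ x ∈ s, deriv (deriv u) x = q x * u x) : SolvesODE q u (deriv u) s := by
  have hu' : ContDiffOn ℝ 1 (deriv u) s := hu.deriv_of_isOpen hs (by norm_num)
  refine ⟨fun x hx => ((hu.differentiableOn (by simp)).differentiableAt
    (hs.mem_nhds hx)).hasDerivAt, fun x hx => ?_⟩
  rw [← hode x hx]
  exact ((hu'.differentiableOn (by simp)).differentiableAt (hs.mem_nhds hx)).hasDerivAt

lemma regularCoulomb_eq_zero_of_isEig {ℓ : ℕ} (hh : h ≠ 0) (hR : 0 < R) (hν : ν ≠ 0)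
    (hE : IsEigCoulombConfined Z ℓ h R (coulombEnergy Z h ν)) :
    regularCoulomb ℓ (Z / (2 * ν * h ^ 2)) ν R = 0 := by
  obtain ⟨-, u, hne, hsmooth, hu0, huR, hradial⟩ := hE
  set κ := Z / (2 * ν * h ^ 2)
  have hu : SolvesODE (coulombPotential ℓ κ ν) u (deriv u) (Ioo 0 R) :=
    solvesODE_of_contDiffOn isOpen_Ioo (hsmooth.mono Ioo_subset_Ioc_self) fun x hx =>
      (radial_equation_iff Z ℓ hh hν hx.1.ne' _ _).1 (hradial x hx)
  have hderiv : Continuous (deriv (regularCoulomb ℓ κ ν)) :=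
    (contDiff_regularCoulomb ℓ κ ν).continuous_deriv (by norm_num)
  exact hu.regular_solution_eq_zero (solvesODE_regularCoulomb ℓ κ ν)
    (continuousOn_coulombPotential ℓ κ ν) hR hu0 (eventually_regularCoulomb_pos ℓ κ ν)
    (regularCoulomb_isBigO_id ℓ κ ν) (hderiv.continuousWithinAt (s := Ioi 0)) huR
    (hsmooth.continuousOn R ⟨hR, le_rfl⟩) hne

lemma coulombEnergy_neg (hZ : Z ≠ 0) (hh : h ≠ 0) (hν : ν ≠ 0) : coulombEnergy Z h ν < 0 := by
  rw [coulombEnergy, neg_lt_zero]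
  positivity

lemma isEig_of_regularCoulomb_eq_zero {ℓ : ℕ} (hZ : Z ≠ 0) (hh : h ≠ 0) (hR : 0 < R) (hν : ν ≠ 0)
    (hzero : regularCoulomb ℓ (Z / (2 * ν * h ^ 2)) ν R = 0) :
    IsEigCoulombConfined Z ℓ h R (coulombEnergy Z h ν) := by
  set κ := Z / (2 * ν * h ^ 2)
  obtain ⟨x, hxpos, hx⟩ :=
    ((eventually_regularCoulomb_pos ℓ κ ν).and (Ioc_mem_nhdsGT hR)).exists
  refine ⟨coulombEnergy_neg hZ hh hν, regularCoulomb ℓ κ ν, ⟨x, hx, hxpos.ne'⟩,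
    (contDiff_regularCoulomb ℓ κ ν).contDiffOn, ?_, hzero, fun y hy => ?_⟩
  · have hcont := (contDiff_regularCoulomb ℓ κ ν).continuous.tendsto 0
    rw [regularCoulomb_zero] at hcont
    exact hcont.mono_left nhdsWithin_le_nhds
  · exact (radial_equation_iff Z ℓ hh hν hy.1.ne' _ _).2
      (hasDerivAt_deriv_regularCoulomb ℓ κ ν hy.1.ne').deriv

lemma isEigCoulombConfined_coulombEnergy_iff {ℓ : ℕ} (hZ : Z ≠ 0) (hh : h ≠ 0) (hR : 0 < R)
    (hν : ν ≠ 0) :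
    IsEigCoulombConfined Z ℓ h R (coulombEnergy Z h ν) ↔
      IsEffectiveQuantumNumber ℓ (Z * R / h ^ 2) ν := by
  have hzero := regularCoulomb_eq_zero_iff ℓ (Z / (2 * ν * h ^ 2)) ν hR.ne'
  rw [show 2 * (Z / (2 * ν * h ^ 2)) * R = Z * R / h ^ 2 / ν by field_simp] at hzero
  exact ⟨fun hE => hzero.1 (regularCoulomb_eq_zero_of_isEig hh hR hν hE),
    fun hM => isEig_of_regularCoulomb_eq_zero hZ hh hR hν (hzero.2 hM)⟩

lemma strictMonoOn_coulombEnergy (hZ : Z ≠ 0) (hh : h ≠ 0) :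
    StrictMonoOn (coulombEnergy Z h) (Ioi 0) := by
  intro ν hν μ _ hνμ
  have hν0 : 0 < ν := hν
  rw [coulombEnergy, coulombEnergy, neg_lt_neg_iff]
  gcongr

lemma surjOn_coulombEnergy (hZ : 0 < Z) (hh : 0 < h) :
    SurjOn (coulombEnergy Z h) (Ioi 0) (Iio 0) := by
  intro E hE
  have hE' : 0 < -E := neg_pos.2 hE
  refine ⟨Z / (2 * h * √(-E)), show 0 < Z / (2 * h * √(-E)) by positivity, ?_⟩
  rw [coulombEnergy, div_pow, mul_pow, Real.sq_sqrt hE'.le]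
  field_simp
  norm_num

end Coulomb

section PerturbedLinearRoot

variable {P Q : ℝ → ℝ} {m r : ℕ} {β A B C c η z : ℝ}

lemma continuousOn_of_abs_sub_le {f : ℝ → ℝ} {s : Set ℝ} {K : ℝ}
    (hf : ∀ x ∈ s, ∀ y ∈ s, |f x - f y| ≤ K * |x - y|) : ContinuousOn f s :=
  (LipschitzOnWith.of_dist_le' hf).continuousOn

lemma exists_eq_mul_of_lt {p : ℝ} (hβ : 0 < β) (hP : ContinuousOn P (Icc 0 β))
    (hQ : ContinuousOn Q (Icc 0 β)) (hP0 : 0 < P 0) (hPp : P β ≤ p) (hcQ : c ≤ Q β)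
    (hpc : p < c * β) : ∃ η ∈ Ioo 0 β, P η = η * Q η := by
  have hcont : ContinuousOn (fun η => η * Q η - P η) (Icc 0 β) := (continuousOn_id.mul hQ).sub hP
  have hβQ : c * β ≤ β * Q β := by rw [mul_comm c]; gcongr
  obtain ⟨η, hη, hroot⟩ := intermediate_value_Ioo hβ.le hcont
    (show (0 : ℝ) ∈ Ioo _ _ from ⟨by linarith, by linarith⟩)
  exact ⟨η, hη, by linarith⟩

lemma three_quarters_mul_le {L : ℝ} (hβ : 0 ≤ β)
    (hQ : ∀ x ∈ Icc 0 β, ∀ y ∈ Icc 0 β, |Q x - Q y| ≤ L * |x - y|) (hη : η ∈ Icc 0 β)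
    (hηL : η * L ≤ Q 0 / 4) : 3 / 4 * Q 0 ≤ Q η := by
  have hlip := (abs_le.1 (hQ η hη 0 ⟨le_rfl, hβ⟩)).1
  rw [sub_zero, abs_of_nonneg hη.1] at hlip
  linarith

-- On `η L ≤ Q 0 / 4` the map `η ↦ η Q η - P η` has slope at least `Q 0 / 2 - K > 0`.
lemma not_two_roots_of_lt {K L η₁ η₂ : ℝ} (hβ : 0 ≤ β)
    (hP : ∀ x ∈ Icc 0 β, ∀ y ∈ Icc 0 β, |P x - P y| ≤ K * |x - y|)
    (hQ : ∀ x ∈ Icc 0 β, ∀ y ∈ Icc 0 β, |Q x - Q y| ≤ L * |x - y|) (hK : K < Q 0 / 2)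
    (h₁ : η₁ ∈ Icc 0 β) (h₂ : η₂ ∈ Icc 0 β) (hL₁ : η₁ * L ≤ Q 0 / 4) (hL₂ : η₂ * L ≤ Q 0 / 4)
    (hroot₁ : P η₁ = η₁ * Q η₁) (hroot₂ : P η₂ = η₂ * Q η₂) : ¬ η₁ < η₂ := by
  intro hlt
  have hd : 0 < η₂ - η₁ := sub_pos.2 hlt
  have hPlip : P η₂ - P η₁ ≤ K * (η₂ - η₁) := by
    simpa [abs_of_pos hd] using (abs_le.1 (hP η₂ h₂ η₁ h₁)).2
  have hQlip : -(L * (η₂ - η₁)) ≤ Q η₂ - Q η₁ := by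
    simpa [abs_of_pos hd] using (abs_le.1 (hQ η₂ h₂ η₁ h₁)).1
  have hslope : (η₂ - η₁) * (Q 0 / 2) ≤ P η₂ - P η₁ := calc
    (η₂ - η₁) * (Q 0 / 2) = (η₂ - η₁) * (3 / 4 * Q 0) - (η₂ - η₁) * (Q 0 / 4) := by ring
    _ ≤ (η₂ - η₁) * Q η₁ - (η₂ - η₁) * (η₂ * L) := by
        gcongr
        exact three_quarters_mul_le hβ hQ h₁ hL₁
    _ = (η₂ - η₁) * Q η₁ + η₂ * -(L * (η₂ - η₁)) := by ring
    _ ≤ (η₂ - η₁) * Q η₁ + η₂ * (Q η₂ - Q η₁) := by gcongr; exact h₂.1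
    _ = P η₂ - P η₁ := by rw [hroot₁, hroot₂]; ring
  have : (η₂ - η₁) * K < (η₂ - η₁) * (Q 0 / 2) := by gcongr
  linarith

lemma abs_root_mul_sub_le {K L : ℝ} (hβ : 0 ≤ β)
    (hP : ∀ x ∈ Icc 0 β, ∀ y ∈ Icc 0 β, |P x - P y| ≤ K * |x - y|)
    (hQ : ∀ x ∈ Icc 0 β, ∀ y ∈ Icc 0 β, |Q x - Q y| ≤ L * |x - y|)
    (hη : η ∈ Icc 0 β) (hroot : P η = η * Q η) :
    |Q 0 * η - P 0| ≤ L * η ^ 2 + K * η := by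
  have h0 : (0 : ℝ) ∈ Icc 0 β := ⟨le_rfl, hβ⟩
  have hQη := hQ 0 h0 η hη
  have hPη := hP η hη 0 h0
  rw [zero_sub, abs_neg, abs_of_nonneg hη.1] at hQη
  rw [sub_zero, abs_of_nonneg hη.1] at hPη
  calc |Q 0 * η - P 0| = |η * (Q 0 - Q η) + (P η - P 0)| := by rw [hroot]; ring_nf
    _ ≤ |η * (Q 0 - Q η)| + |P η - P 0| := abs_add_le _ _
    _ ≤ η * (L * η) + K * η := by
        rw [abs_mul, abs_of_nonneg hη.1]
        exact add_le_add (mul_le_mul_of_nonneg_left hQη hη.1) hPη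
    _ = L * η ^ 2 + K * η := by ring

/-- Bounds, at one value of the large parameter `z`, on the two sides of a root equation
`P η = η Q η` over `[0, β]`: `P` is of size `A z ^ m`, and `Q` is of size `B exp z / z ^ r` at
`η = 0` but only polynomially bounded below away from it. -/
structure RootBounds (P Q : ℝ → ℝ) (m r : ℕ) (β A B C c z : ℝ) : Prop where
  pos_left : ∀ η ∈ Icc 0 β, 0 < P η
  left_le : ∀ η ∈ Icc 0 β, P η ≤ C * z ^ m
  left_lipschitz : ∀ x ∈ Icc 0 β, ∀ y ∈ Icc 0 β, |P x - P y| ≤ C * z ^ m * |x - y|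
  right_lipschitz : ∀ x ∈ Icc 0 β, ∀ y ∈ Icc 0 β, |Q x - Q y| ≤ C * (z * Real.exp z) * |x - y|
  le_right : ∀ η ∈ Icc 0 β, c * z ^ (m + r + 2) ≤ Q η
  right_zero : |Q 0 * z ^ r - B * Real.exp z| ≤ C * (Real.exp z / z)
  left_zero : |P 0 - A * z ^ m| ≤ C * (z ^ m / z)

namespace RootBounds

lemma half_exp_le (h : RootBounds P Q m r β A B C c z) (hz : 0 < z) (hBz : 2 * C ≤ B * z) :
    B / 2 * Real.exp z ≤ Q 0 * z ^ r := by
  have hC : C / z ≤ B / 2 := by rw [div_le_iff₀ hz]; linarith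
  have herr : C * (Real.exp z / z) ≤ B / 2 * Real.exp z := calc
    C * (Real.exp z / z) = C / z * Real.exp z := by ring
    _ ≤ B / 2 * Real.exp z := by gcongr
  linarith [(abs_le.1 h.right_zero).1]

lemma root_mul_lipschitz_le (h : RootBounds P Q m r β A B C c z) (hc : 0 < c) (hC : 0 < C)
    (hz : 0 < z) (hBz : 2 * C ≤ B * z) (hz' : 8 * C ^ 2 ≤ c * B * z) (hη : η ∈ Icc 0 β)
    (hroot : P η = η * Q η) : η * (C * (z * Real.exp z)) ≤ Q 0 / 4 := by
  have hηc : η * (c * z ^ (m + r + 2)) ≤ C * z ^ m := calc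
    η * (c * z ^ (m + r + 2)) ≤ η * Q η := by gcongr; exacts [hη.1, h.le_right η hη]
    _ = P η := hroot.symm
    _ ≤ C * z ^ m := h.left_le η hη
  refine le_of_mul_le_mul_right ?_ (show 0 < c * z ^ (m + r + 2) by positivity)
  calc η * (C * (z * Real.exp z)) * (c * z ^ (m + r + 2))
      = η * (c * z ^ (m + r + 2)) * (C * (z * Real.exp z)) := by ring
    _ ≤ C * z ^ m * (C * (z * Real.exp z)) := by gcongr
    _ = 8 * C ^ 2 * (z ^ (m + 1) * Real.exp z / 8) := by ring
    _ ≤ c * B * z * (z ^ (m + 1) * Real.exp z / 8) := by gcongr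
    _ = B / 2 * Real.exp z * (c * z ^ (m + 2) / 4) := by ring
    _ ≤ Q 0 * z ^ r * (c * z ^ (m + 2) / 4) :=
        mul_le_mul_of_nonneg_right (h.half_exp_le hz hBz) (by positivity)
    _ = Q 0 / 4 * (c * z ^ (m + r + 2)) := by ring

lemma lipschitz_lt_half (h : RootBounds P Q m r β A B C c z) (hB : 0 < B) (hz : 0 < z)
    (hBz : 2 * C ≤ B * z) (hBz' : 4 * C < B * z) (hexp : z ^ (m + r + 1) ≤ Real.exp z) :
    C * z ^ m < Q 0 / 2 := by
  refine lt_of_mul_lt_mul_right ?_ (show 0 ≤ z ^ r by positivity)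
  calc C * z ^ m * z ^ r = 4 * C * (z ^ (m + r) / 4) := by ring
    _ < B * z * (z ^ (m + r) / 4) := by gcongr
    _ = B / 4 * z ^ (m + r + 1) := by ring
    _ ≤ B / 4 * Real.exp z := by gcongr
    _ = B / 2 * Real.exp z / 2 := by ring
    _ ≤ Q 0 * z ^ r / 2 := div_le_div_of_nonneg_right (h.half_exp_le hz hBz) (by norm_num)
    _ = Q 0 / 2 * z ^ r := by ring

lemma root_le (h : RootBounds P Q m r β A B C c z) (hβ : 0 ≤ β) (hB : 0 < B) (hC : 0 < C)
    (hz : 0 < z) (hBz : 2 * C ≤ B * z) (hη : η ∈ Icc 0 β) (hroot : P η = η * Q η)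
    (hηL : η * (C * (z * Real.exp z)) ≤ Q 0 / 4) :
    η ≤ 3 * C / B * (z ^ (m + r) * Real.exp (-z)) := by
  have hηQ : η * (3 / 4 * Q 0) ≤ C * z ^ m := calc
    η * (3 / 4 * Q 0) ≤ η * Q η := by
      gcongr
      exacts [hη.1, three_quarters_mul_le hβ h.right_lipschitz hη hηL]
    _ = P η := hroot.symm
    _ ≤ C * z ^ m := h.left_le η hη
  have hηexp : η * (B / 2 * Real.exp z) ≤ 4 / 3 * (C * z ^ (m + r)) := calc
    η * (B / 2 * Real.exp z) ≤ η * (Q 0 * z ^ r) :=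
      mul_le_mul_of_nonneg_left (h.half_exp_le hz hBz) hη.1
    _ = 4 / 3 * (η * (3 / 4 * Q 0)) * z ^ r := by ring
    _ ≤ 4 / 3 * (C * z ^ m) * z ^ r := by gcongr
    _ = 4 / 3 * (C * z ^ (m + r)) := by ring
  rw [Real.exp_neg, ← div_eq_mul_inv, div_mul_div_comm, le_div_iff₀ (by positivity)]
  have : 0 ≤ C * z ^ (m + r) := by positivity
  linarith

lemma abs_scaled_root_sub_le {Y : ℝ} (h : RootBounds P Q m r β A B C c z) (hβ : 0 ≤ β)
    (hC : 0 < C) (hz : 0 < z)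
    (hexp : z ^ (m + r + 1) ≤ Real.exp z) (hexp' : z ^ (m + 2 * r + 2) ≤ Real.exp z)
    (hη : η ∈ Icc 0 β) (hroot : P η = η * Q η) (hY : η ≤ Y * (z ^ (m + r) * Real.exp (-z))) :
    |B * Real.exp z / z ^ r * η - A * z ^ m| ≤ (2 * C * Y + C * Y ^ 2 + C) * (z ^ m / z) := by
  set E := Real.exp z
  set τ := z ^ (m + r) * Real.exp (-z)
  have hE : 0 < E := Real.exp_pos z
  have hτ : τ = z ^ (m + r) / E := by rw [div_eq_mul_inv, ← Real.exp_neg]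
  have hη0 : 0 ≤ η := hη.1
  have hY0 : 0 ≤ Y := nonneg_of_mul_nonneg_left (hη0.trans hY) (by positivity)
  have slope_error : |(B * E / z ^ r - Q 0) * η| ≤ C * Y * (z ^ m / z) := calc
    |(B * E / z ^ r - Q 0) * η| = |Q 0 * z ^ r - B * E| / z ^ r * η := by
      rw [abs_mul, abs_of_nonneg hη0, abs_sub_comm, ← abs_of_pos (pow_pos hz r), ← abs_div,
        abs_of_pos (pow_pos hz r)]
      field_simp
    _ ≤ C * (E / z) / z ^ r * (Y * τ) := by gcongr; exact h.right_zero
    _ = C * Y * (z ^ m / z) := by rw [hτ]; field_simp; ring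
  have quadratic_error : C * (z * E) * η ^ 2 ≤ C * Y ^ 2 * (z ^ m / z) := calc
    C * (z * E) * η ^ 2 ≤ C * (z * E) * (Y * τ) ^ 2 := by gcongr
    _ = C * Y ^ 2 * (z ^ m / z) * (z ^ (m + 2 * r + 2) / E) := by rw [hτ]; field_simp; ring
    _ ≤ C * Y ^ 2 * (z ^ m / z) * 1 := by gcongr; exact (div_le_one hE).2 hexp'
    _ = C * Y ^ 2 * (z ^ m / z) := mul_one _
  have linear_error : C * z ^ m * η ≤ C * Y * (z ^ m / z) := calc
    C * z ^ m * η ≤ C * z ^ m * (Y * τ) := by gcongr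
    _ = C * Y * (z ^ m / z) * (z ^ (m + r + 1) / E) := by rw [hτ]; field_simp; ring
    _ ≤ C * Y * (z ^ m / z) * 1 := by gcongr; exact (div_le_one hE).2 hexp
    _ = C * Y * (z ^ m / z) := mul_one _
  have root_error := abs_root_mul_sub_le hβ h.left_lipschitz h.right_lipschitz hη hroot
  calc |B * E / z ^ r * η - A * z ^ m|
      = |(B * E / z ^ r - Q 0) * η + (Q 0 * η - P 0) + (P 0 - A * z ^ m)| := by ring_nf
    _ ≤ |(B * E / z ^ r - Q 0) * η| + |Q 0 * η - P 0| + |P 0 - A * z ^ m| := abs_add_three _ _ _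
    _ ≤ (2 * C * Y + C * Y ^ 2 + C) * (z ^ m / z) := by linarith [h.left_zero]

end RootBounds

lemma eventually_pow_le_exp (k : ℕ) : ∀ᶠ z : ℝ in atTop, z ^ k ≤ Real.exp z := by
  filter_upwards [(Real.tendsto_exp_div_pow_atTop k).eventually_ge_atTop 1,
    eventually_gt_atTop 0] with z hz hz0
  rwa [le_div_iff₀ (by positivity), one_mul] at hz

lemma eventually_lt_const_mul (K : ℝ) {t : ℝ} (ht : 0 < t) : ∀ᶠ z : ℝ in atTop, K < t * z :=
  (tendsto_id.const_mul_atTop ht).eventually_gt_atTop K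

lemma RootBounds.abs_root_sub_le (h : RootBounds P Q m r β A B C c z) (hβ : 0 ≤ β) (hB : 0 < B)
    (hC : 0 < C) (hz : 0 < z) (hBz : 2 * C ≤ B * z) (hexp : z ^ (m + r + 1) ≤ Real.exp z)
    (hexp' : z ^ (m + 2 * r + 2) ≤ Real.exp z) (hη : η ∈ Icc 0 β) (hroot : P η = η * Q η)
    (hηL : η * (C * (z * Real.exp z)) ≤ Q 0 / 4) :
    |η - A / B * (z ^ (m + r) * Real.exp (-z))|
      ≤ (2 * C * (3 * C / B) + C * (3 * C / B) ^ 2 + C) / B / z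
        * (z ^ (m + r) * Real.exp (-z)) := by
  set E := Real.exp z
  have hE : 0 < E := Real.exp_pos z
  have hτ : z ^ (m + r) * Real.exp (-z) = z ^ (m + r) / E := by
    rw [div_eq_mul_inv, ← Real.exp_neg]
  have scaled := h.abs_scaled_root_sub_le hβ hC hz hexp hexp' hη hroot
    (h.root_le hβ hB hC hz hBz hη hroot hηL)
  have hs : 0 < z ^ r / (B * E) := by positivity
  calc |η - A / B * (z ^ (m + r) * Real.exp (-z))|
      = z ^ r / (B * E) * |B * E / z ^ r * η - A * z ^ m| := by
        rw [hτ, ← abs_of_pos hs, ← abs_mul]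
        congr 1
        field_simp
        ring
    _ ≤ z ^ r / (B * E)
          * ((2 * C * (3 * C / B) + C * (3 * C / B) ^ 2 + C) * (z ^ m / z)) := by gcongr
    _ = _ := by rw [hτ]; field_simp; ring

theorem eventually_exists_unique_root {P Q : ℝ → ℝ → ℝ} (hβ : 0 < β) (hB : 0 < B) (hC : 0 < C)
    (hc : 0 < c) (h : ∀ᶠ z in atTop, RootBounds (P z) (Q z) m r β A B C c z) :
    ∃ D > 0, ∀ᶠ z in atTop, ∃ η ∈ Ioo 0 β, P z η = η * Q z η ∧
      |η - A / B * (z ^ (m + r) * Real.exp (-z))| ≤ D / z * (z ^ (m + r) * Real.exp (-z)) ∧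
      ∀ η' ∈ Icc 0 β, P z η' = η' * Q z η' → η' = η := by
  refine ⟨(2 * C * (3 * C / B) + C * (3 * C / B) ^ 2 + C) / B, by positivity, ?_⟩
  filter_upwards [h, eventually_ge_atTop 1, eventually_lt_const_mul C (mul_pos hc hβ),
    eventually_lt_const_mul (4 * C) hB, eventually_lt_const_mul (8 * C ^ 2) (mul_pos hc hB),
    eventually_pow_le_exp (m + r + 1), eventually_pow_le_exp (m + 2 * r + 2)]
    with z h hz1 hcβz hBz hcBz hexp hexp'
  have hz : 0 < z := one_pos.trans_le hz1
  have hBz₂ : 2 * C ≤ B * z := by linarith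
  have hcrit : C * z ^ m < c * z ^ (m + r + 2) * β := calc
    C * z ^ m < c * β * z * z ^ m := by gcongr
    _ = c * β * z ^ (m + 1) := by ring
    _ ≤ c * β * z ^ (m + r + 2) := by gcongr <;> omega
    _ = c * z ^ (m + r + 2) * β := by ring
  have hβmem : β ∈ Icc 0 β := ⟨hβ.le, le_rfl⟩
  obtain ⟨η, hη, hroot⟩ := exists_eq_mul_of_lt hβ (continuousOn_of_abs_sub_le h.left_lipschitz)
    (continuousOn_of_abs_sub_le h.right_lipschitz) (h.pos_left 0 ⟨le_rfl, hβ.le⟩)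
    (h.left_le β hβmem) (h.le_right β hβmem) hcrit
  have hηL {x : ℝ} (hx : x ∈ Icc 0 β) (hxroot : P z x = x * Q z x) :=
    h.root_mul_lipschitz_le hc hC hz hBz₂ hcBz.le hx hxroot
  have hK := h.lipschitz_lt_half hB hz hBz₂ hBz hexp
  have hη' := Ioo_subset_Icc_self hη
  refine ⟨η, hη, hroot, h.abs_root_sub_le hβ.le hB hC hz hBz₂ hexp hexp' hη' hroot
    (hηL hη' hroot), fun x hx hxroot => ?_⟩
  have hle {x y : ℝ} (hx : x ∈ Icc 0 β) (hy : y ∈ Icc 0 β) (hxr : P z x = x * Q z x)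
      (hyr : P z y = y * Q z y) : y ≤ x :=
    not_lt.1 (not_two_roots_of_lt hβ.le h.left_lipschitz h.right_lipschitz hK hx hy
      (hηL hx hxr) (hηL hy hyr) hxr hyr)
  exact le_antisymm (hle hη' hx hroot hxroot) (hle hx hη' hxroot hroot)

end PerturbedLinearRoot

section BoundedLipschitz

/-- `f` is bounded by `M` and `K`-Lipschitz on `s`; unlike in `LipschitzOnWith`, the constants are
real numbers, so that they can be estimated freely. -/
structure BoundedLipschitzOn (f : ℝ → ℝ) (s : Set ℝ) (M K : ℝ) : Prop where
  abs_le : ∀ x ∈ s, |f x| ≤ M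
  abs_sub_le : ∀ x ∈ s, ∀ y ∈ s, |f x - f y| ≤ K * |x - y|

namespace BoundedLipschitzOn

variable {f g : ℝ → ℝ} {s t : Set ℝ} {M M' K K' : ℝ}

lemma mono (hf : BoundedLipschitzOn f s M K) (hts : t ⊆ s) (hM : M ≤ M') (hK : K ≤ K') :
    BoundedLipschitzOn f t M' K' where
  abs_le x hx := (hf.abs_le x (hts hx)).trans hM
  abs_sub_le x hx y hy := (hf.abs_sub_le x (hts hx) y (hts hy)).trans (by gcongr)

lemma mul (hf : BoundedLipschitzOn f s M K) (hg : BoundedLipschitzOn g s M' K') :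
    BoundedLipschitzOn (fun x => f x * g x) s (M * M') (M * K' + K * M') where
  abs_le x hx := by
    rw [abs_mul]
    exact mul_le_mul (hf.abs_le x hx) (hg.abs_le x hx) (abs_nonneg _)
      ((abs_nonneg _).trans (hf.abs_le x hx))
  abs_sub_le x hx y hy := calc
    |f x * g x - f y * g y| = |f x * (g x - g y) + (f x - f y) * g y| := by ring_nf
    _ ≤ |f x| * |g x - g y| + |f x - f y| * |g y| := by
        simpa only [abs_mul] using abs_add_le (f x * (g x - g y)) ((f x - f y) * g y)
    _ ≤ M * (K' * |x - y|) + K * |x - y| * M' := by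
        gcongr
        exacts [(abs_nonneg _).trans (hf.abs_le x hx), hf.abs_le x hx, hg.abs_sub_le x hx y hy,
          (abs_nonneg _).trans (hf.abs_sub_le x hx y hy), hf.abs_sub_le x hx y hy, hg.abs_le y hy]
    _ = (M * K' + K * M') * |x - y| := by ring

lemma prod_one {f : ℕ → ℝ → ℝ} (hf : ∀ i, BoundedLipschitzOn (f i) s 1 1) (n : ℕ) :
    BoundedLipschitzOn (fun x => ∏ i ∈ Finset.range n, f i x) s 1 n := by
  induction n with
  | zero => exact ⟨by simp, by simp⟩
  | succ n ih =>
    simp only [Finset.prod_range_succ]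
    exact (ih.mul (hf n)).mono subset_rfl (by simp) (by simp [add_comm])

lemma pow_one (hf : BoundedLipschitzOn f s 1 1) (n : ℕ) :
    BoundedLipschitzOn (fun x => f x ^ n) s 1 n := by
  simpa using prod_one (f := fun _ => f) (fun _ => hf) n

end BoundedLipschitzOn

lemma exists_boundedLipschitzOn_of_contDiff {f : ℝ → ℝ} {s : Set ℝ} (hf : ContDiff ℝ 1 f)
    (hs : IsCompact s) : ∃ M K, BoundedLipschitzOn f s M K := by
  obtain ⟨M, hM⟩ := hs.exists_bound_of_continuousOn hf.continuous.continuousOn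
  obtain ⟨K, hK⟩ := hf.locallyLipschitz.locallyLipschitzOn.exists_lipschitzOnWith_of_compact hs
  exact ⟨M, K, hM, fun x hx y hy => hK.dist_le_mul x hx y hy⟩

lemma boundedLipschitzOn_div_add {N : ℝ} (hN : 1 ≤ N) :
    BoundedLipschitzOn (fun η => N / (N + η)) (Ici 0) 1 1 where
  abs_le η hη := by
    have hη : 0 ≤ η := hη
    rw [abs_of_nonneg (by positivity)]
    exact div_le_one_of_le₀ (le_add_of_nonneg_right hη) (by positivity)
  abs_sub_le x hx y hy := by
    have hx : 0 ≤ x := hx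
    have hy : 0 ≤ y := hy
    have hslope : N / ((N + x) * (N + y)) ≤ 1 := by
      rw [div_le_one (by positivity)]
      nlinarith
    calc |N / (N + x) - N / (N + y)| = |N / ((N + x) * (N + y)) * (y - x)| := by
          congr 1; field_simp; ring
      _ = N / ((N + x) * (N + y)) * |x - y| := by
          rw [abs_mul, abs_sub_comm y x, abs_of_nonneg (by positivity)]
      _ ≤ 1 * |x - y| := by gcongr

lemma boundedLipschitzOn_kummerCoeff_one_sub {b : ℝ} (hb : 1 ≤ b) (i : ℕ) :
    BoundedLipschitzOn (fun η => kummerCoeff (1 - η) b i) (Icc 0 1) 1 i := by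
  refine .prod_one (fun j => ⟨fun η hη => ?_, fun x _ y _ => ?_⟩) i
  · have hbj : 0 < b + j := by positivity
    have h0 : 0 ≤ 1 - η + j := by linarith [hη.2, j.cast_nonneg (α := ℝ)]
    rw [abs_of_nonneg (by positivity), div_le_one hbj]
    linarith [hη.1]
  · have hbj : 1 ≤ b + j := hb.trans (le_add_of_nonneg_right j.cast_nonneg)
    rw [← sub_div, abs_div, abs_of_pos (one_pos.trans_le hbj), one_mul, abs_sub_comm x y]
    refine (div_le_self (abs_nonneg _) hbj).trans_eq ?_
    ring_nf

end BoundedLipschitz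

section KummerSplit

open scoped Nat

variable {b η w : ℝ}

lemma contDiff_kummerCoeff (b : ℝ) (k : ℕ) {n : WithTop ℕ∞} :
    ContDiff ℝ n fun a => kummerCoeff a b k :=
  contDiff_prod fun _ _ => (contDiff_id.add contDiff_const).div_const _

lemma kummerCoeff_pos {a : ℝ} (ha : 0 < a) (hb : 0 < b) (k : ℕ) : 0 < kummerCoeff a b k :=
  Finset.prod_pos fun j _ => by positivity

lemma kummerCoeff_one_add_one (c i : ℕ) :
    kummerCoeff 1 (c + 1) i = i ! * c ! / (c + i)! := by
  induction i with
  | zero => simp [kummerCoeff, Nat.factorial_ne_zero]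
  | succ i ih =>
    rw [kummerCoeff_succ, ih, ← add_assoc, Nat.factorial_succ, Nat.factorial_succ]
    push_cast
    field_simp
    ring

lemma neg_one_pow_mul_kummerCoeff_neg (m b : ℕ) {k : ℕ} (hk : k ≤ m) :
    (-1) ^ k * kummerCoeff (-m) (b + 1) k = m.descFactorial k * b ! / (b + k)! := by
  induction k with
  | zero => simp [kummerCoeff, Nat.factorial_ne_zero]
  | succ k ih =>
    have hrec := ih (Nat.le_of_succ_le hk)
    rw [kummerCoeff_succ, Nat.descFactorial_succ, ← add_assoc, Nat.factorial_succ, Nat.cast_mul,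
      Nat.cast_sub (Nat.le_of_succ_le hk)]
    calc (-1) ^ (k + 1) * (kummerCoeff (-m) (b + 1) k * ((-(m : ℝ) + k) / (b + 1 + k)))
        = (-1) ^ k * kummerCoeff (-m) (b + 1) k * ((m - k) / (b + 1 + k)) := by ring
      _ = _ := by rw [hrec]; push_cast; field_simp; ring

/-- The coefficient of `w ^ m / m!` in `(-1) ^ m M(-m - η, b, w)`, the last one without the
factor `η`. -/
noncomputable def kummerTopCoeff (m : ℕ) (b η : ℝ) : ℝ := (-1) ^ m * kummerCoeff (-m - η) b m

/-- The coefficients of `(-1) ^ m M(-m - η, b, w)` beyond degree `m`, divided by `-η`. -/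
noncomputable def kummerTailCoeff (m : ℕ) (b η : ℝ) (i : ℕ) : ℝ :=
  kummerTopCoeff m b η / (b + m) * kummerCoeff (1 - η) (b + m + 1) i

/-- The terms of degree at most `m` of `(-1) ^ m M(-m - η, b, w)`. -/
noncomputable def kummerHead (m : ℕ) (b η w : ℝ) : ℝ :=
  ∑ k ∈ Finset.range (m + 1), (-1) ^ m * kummerCoeff (-m - η) b k * (w ^ k / k !)

/-- The terms of degree above `m` of `(-1) ^ m M(-m - η, b, w)`, divided by `-η`. -/
noncomputable def kummerTail (m : ℕ) (b η w : ℝ) : ℝ :=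
  ∑' i, kummerTailCoeff m b η i * (w ^ (i + (m + 1)) / (i + (m + 1))!)

lemma kummerCoeff_eq_neg_mul_kummerTailCoeff (m : ℕ) (b η : ℝ) (i : ℕ) :
    (-1) ^ m * kummerCoeff (-m - η) b (i + (m + 1)) = -η * kummerTailCoeff m b η i := by
  have hsplit : kummerCoeff (-m - η) b (i + (m + 1)) =
      kummerCoeff (-m - η) b m * (-η / (b + m)) * kummerCoeff (1 - η) (b + m + 1) i := by
    rw [add_comm i, kummerCoeff, Finset.prod_range_add, Finset.prod_range_succ]
    congr 1
    · rw [show -(m : ℝ) - η + m = -η by ring, kummerCoeff]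
    · exact Finset.prod_congr rfl fun j _ => by push_cast; ring_nf
  rw [hsplit, kummerTailCoeff, kummerTopCoeff]
  ring

lemma neg_one_pow_mul_kummerM (hb : 0 < b) (m : ℕ) (η w : ℝ) :
    (-1) ^ m * kummerM (-m - η) b w = kummerHead m b η w - η * kummerTail m b η w := by
  rw [kummerM, egf, ← (summable_kummerM hb (-m - η) w).sum_add_tsum_nat_add (m + 1), mul_add,
    Finset.mul_sum, ← tsum_mul_left, sub_eq_add_neg (kummerHead m b η w), ← neg_mul, kummerHead,
    kummerTail, ← tsum_mul_left]
  simp only [← mul_assoc, kummerCoeff_eq_neg_mul_kummerTailCoeff]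

lemma kummerM_eq_zero_iff (hb : 0 < b) (m : ℕ) (η w : ℝ) :
    kummerM (-m - η) b w = 0 ↔ kummerHead m b η w = η * kummerTail m b η w := by
  rw [← sub_eq_zero (a := kummerHead m b η w), ← neg_one_pow_mul_kummerM hb,
    mul_eq_zero_iff_left (pow_ne_zero m (by norm_num))]

lemma contDiff_kummerTopCoeff (m : ℕ) (b : ℝ) {n : WithTop ℕ∞} :
    ContDiff ℝ n (kummerTopCoeff m b) :=
  contDiff_const.mul ((contDiff_kummerCoeff b m).comp (contDiff_const.sub contDiff_id))

lemma contDiff_kummerTailCoeff (m : ℕ) (b : ℝ) (i : ℕ) {n : WithTop ℕ∞} :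
    ContDiff ℝ n fun η => kummerTailCoeff m b η i :=
  ((contDiff_kummerTopCoeff m b).div_const _).mul
    ((contDiff_kummerCoeff _ i).comp (contDiff_const.sub contDiff_id))

lemma kummerTopCoeff_pos (hb : 0 < b) (m : ℕ) (hη : -1 < η) : 0 < kummerTopCoeff m b η := by
  have hprod : kummerTopCoeff m b η = ∏ j ∈ Finset.range m, (m + η - j) / (b + j) := by
    rw [kummerTopCoeff, kummerCoeff, show (-1 : ℝ) ^ m = ∏ _j ∈ Finset.range m, -1 by simp,
      ← Finset.prod_mul_distrib]
    exact Finset.prod_congr rfl fun j _ => by ring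
  rw [hprod]
  refine Finset.prod_pos fun j hj => div_pos ?_ (by positivity)
  have : (j : ℝ) + 1 ≤ m := mod_cast Finset.mem_range.1 hj
  linarith

lemma kummerTailCoeff_pos (hb : 0 < b) (m i : ℕ) (hη : η ∈ Ioo (-1) 1) :
    0 < kummerTailCoeff m b η i :=
  mul_pos (div_pos (kummerTopCoeff_pos hb m hη.1) (by positivity))
    (kummerCoeff_pos (sub_pos.2 hη.2) (by positivity) i)

lemma kummerTail_nonneg (hb : 0 < b) (m : ℕ) (hη : η ∈ Ioo (-1) 1) (hw : 0 ≤ w) :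
    0 ≤ kummerTail m b η w :=
  tsum_nonneg fun i => mul_nonneg (kummerTailCoeff_pos hb m i hη).le (by positivity)

lemma kummerTopCoeff_zero (m b : ℕ) : kummerTopCoeff m (b + 1) 0 = m ! * b ! / (b + m)! := by
  rw [kummerTopCoeff, sub_zero, neg_one_pow_mul_kummerCoeff_neg m b le_rfl,
    Nat.descFactorial_self]

lemma kummerTailCoeff_zero (m b i : ℕ) :
    kummerTailCoeff m (b + 1) 0 i = m ! * b ! * (i ! / (b + 1 + m + i)!) := by
  have hcoeff := kummerCoeff_one_add_one (b + 1 + m) i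
  push_cast at hcoeff
  rw [kummerTailCoeff, kummerTopCoeff_zero, sub_zero, hcoeff,
    show b + 1 + m = b + m + 1 by ring, Nat.factorial_succ (b + m)]
  push_cast
  field_simp
  ring

end KummerSplit

section HeadEstimates

open scoped Nat

variable {b η w z N : ℝ}

lemma pow_div_factorial_le {k m : ℕ} (hkm : k ≤ m) (hz : 1 ≤ z) : z ^ k / k ! ≤ z ^ m :=
  (div_le_self (by positivity) (mod_cast k.factorial_pos)).trans (pow_le_pow_right₀ hz hkm)

lemma abs_sum_range_succ_le {m : ℕ} {d M : ℕ → ℝ} (hd : ∀ k, |d k| ≤ M k) (hz : 1 ≤ z) :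
    |∑ k ∈ Finset.range (m + 1), d k * (z ^ k / k !)|
      ≤ (∑ k ∈ Finset.range (m + 1), M k) * z ^ m := by
  rw [Finset.sum_mul]
  refine (Finset.abs_sum_le_sum_abs _ _).trans (Finset.sum_le_sum fun k hk => ?_)
  have hpos : 0 ≤ z ^ k / k ! := by positivity
  rw [abs_mul, abs_of_nonneg hpos]
  exact mul_le_mul (hd k) (pow_div_factorial_le (Finset.mem_range_succ_iff.1 hk) hz) hpos
    ((abs_nonneg _).trans (hd k))

lemma abs_sum_range_le {m : ℕ} {d M : ℕ → ℝ} (hd : ∀ k, |d k| ≤ M k) (hz : 1 ≤ z) :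
    |∑ k ∈ Finset.range m, d k * (z ^ k / k !)|
      ≤ (∑ k ∈ Finset.range m, M k) * (z ^ m / z) := by
  cases m with
  | zero => simp
  | succ m =>
    refine (abs_sum_range_succ_le hd hz).trans_eq ?_
    rw [pow_succ, mul_div_cancel_right₀ _ (one_pos.trans_le hz).ne']

lemma BoundedLipschitzOn.sum_range_succ {f : ℕ → ℝ → ℝ} {s : Set ℝ} {M K : ℕ → ℝ}
    (hf : ∀ k, BoundedLipschitzOn (f k) s (M k) (K k)) (m : ℕ) (hz : 1 ≤ z) :
    BoundedLipschitzOn (fun x => ∑ k ∈ Finset.range (m + 1), f k x * (z ^ k / k !)) s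
      ((∑ k ∈ Finset.range (m + 1), M k) * z ^ m)
      ((∑ k ∈ Finset.range (m + 1), K k) * z ^ m) where
  abs_le x hx := abs_sum_range_succ_le (fun k => (hf k).abs_le x hx) hz
  abs_sub_le x hx y hy := by
    simp only [← Finset.sum_sub_distrib, ← sub_mul]
    refine (abs_sum_range_succ_le (fun k => (hf k).abs_sub_le x hx y hy) hz).trans_eq ?_
    rw [← Finset.sum_mul]
    ring

lemma kummerHead_mul (m : ℕ) (b η z t : ℝ) : kummerHead m b η (z * t) =
    ∑ k ∈ Finset.range (m + 1), (-1) ^ m * kummerCoeff (-m - η) b k * t ^ k * (z ^ k / k !) :=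
  Finset.sum_congr rfl fun k _ => by rw [mul_pow]; ring

lemma exists_boundedLipschitzOn_kummerHead (m : ℕ) (b : ℝ) (hN : 1 ≤ N) :
    ∃ C, ∀ z, 1 ≤ z → BoundedLipschitzOn (fun η => kummerHead m b η (z * (N / (N + η))))
      (Icc 0 (1 / 2)) (C * z ^ m) (C * z ^ m) := by
  have hcoeff k : ∃ M K, BoundedLipschitzOn (fun η => (-1) ^ m * kummerCoeff (-m - η) b k)
      (Icc 0 (1 / 2)) M K :=
    exists_boundedLipschitzOn_of_contDiff (contDiff_const.mul
      ((contDiff_kummerCoeff b k).comp (contDiff_const.sub contDiff_id))) isCompact_Icc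
  choose M K hMK using hcoeff
  have hscaled k := (hMK k).mul
    (((boundedLipschitzOn_div_add hN).pow_one k).mono Icc_subset_Ici_self le_rfl le_rfl)
  refine ⟨max (∑ k ∈ Finset.range (m + 1), M k * 1)
    (∑ k ∈ Finset.range (m + 1), (M k * k + K k * 1)), fun z hz => ?_⟩
  have hz0 : 0 ≤ z := zero_le_one.trans hz
  simp only [kummerHead_mul]
  exact (BoundedLipschitzOn.sum_range_succ hscaled m hz).mono subset_rfl
    (by gcongr; exact le_max_left _ _) (by gcongr; exact le_max_right _ _)

lemma exists_abs_kummerHead_sub_le (hb : 0 < b) (m : ℕ) :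
    ∃ C, ∀ w, 1 ≤ w → ∀ η ∈ Icc (-(1 / 2)) (1 / 2),
      |kummerHead m b η w - kummerTopCoeff m b η * (w ^ m / m !)| ≤ C * (w ^ m / w) := by
  refine ⟨∑ k ∈ Finset.range m, ((m + 1) / b + 1) ^ k, fun w hw η hη => ?_⟩
  rw [kummerHead, Finset.sum_range_succ, kummerTopCoeff, add_sub_cancel_right]
  refine abs_sum_range_le (fun k => ?_) hw
  have hη' : |-(m : ℝ) - η| ≤ m + 1 := by
    rw [abs_le]
    constructor <;> linarith [hη.1, hη.2, (Nat.cast_nonneg m : (0 : ℝ) ≤ m)]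
  rw [abs_mul, abs_pow, abs_neg, abs_one, one_pow, one_mul]
  refine (abs_kummerCoeff_le hb _ k).trans ?_
  rw [one_mul]
  gcongr

lemma eventually_kummerHead_pos (hb : 0 < b) (m : ℕ) :
    ∀ᶠ w in atTop, ∀ η ∈ Icc (-(1 / 2)) (1 / 2), 0 < kummerHead m b η w := by
  obtain ⟨C, hC⟩ := exists_abs_kummerHead_sub_le hb m
  obtain ⟨t, ht, htop⟩ := isCompact_Icc.exists_forall_le'
    (contDiff_kummerTopCoeff (n := 0) m b).continuous.continuousOn
    fun η (hη : η ∈ Icc (-(1 / 2) : ℝ) (1 / 2)) =>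
      kummerTopCoeff_pos hb m (show -1 < η by linarith [hη.1])
  filter_upwards [eventually_ge_atTop 1, eventually_lt_const_mul (C * m !) ht] with w hw hCw η hη
  have hw0 : 0 < w := one_pos.trans_le hw
  have hlower : t * (w ^ m / m !) ≤ kummerTopCoeff m b η * (w ^ m / m !) := by
    gcongr
    exact htop η hη
  have herror : C * (w ^ m / w) < t * (w ^ m / m !) := calc
    C * (w ^ m / w) = C * m ! * (w ^ m / w / m !) := by field_simp
    _ < t * w * (w ^ m / w / m !) := by gcongr
    _ = t * (w ^ m / m !) := by field_simp
  linarith [(abs_le.1 (hC w hw η hη)).1]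

lemma exists_abs_kummerHead_zero_sub_le (m b : ℕ) :
    ∃ C, ∀ w, 1 ≤ w →
      |kummerHead m (b + 1) 0 w - b ! / (b + m)! * w ^ m| ≤ C * (w ^ m / w) := by
  obtain ⟨C, hC⟩ := exists_abs_kummerHead_sub_le (b := b + 1) (by positivity) m
  refine ⟨C, fun w hw => ?_⟩
  have htop : kummerTopCoeff m (b + 1) 0 * (w ^ m / m !) = b ! / (b + m)! * w ^ m := by
    rw [kummerTopCoeff_zero]
    field_simp
  rw [← htop]
  exact hC w hw 0 (by norm_num)

end HeadEstimates

section TailEstimates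

open scoped Nat

variable {b η w z N : ℝ}

lemma exists_boundedLipschitzOn_kummerTailCoeff (hb : 0 ≤ b) (m : ℕ) (hN : 1 ≤ N) :
    ∃ L, ∀ i : ℕ, BoundedLipschitzOn
      (fun η => kummerTailCoeff m b η i * (N / (N + η)) ^ (i + (m + 1))) (Icc 0 (1 / 2))
      (L * ((i + (m + 1) : ℕ) + 1)) (L * ((i + (m + 1) : ℕ) + 1)) := by
  obtain ⟨M, K, hMK⟩ := exists_boundedLipschitzOn_of_contDiff
    ((contDiff_kummerTopCoeff m b).div_const (b + m)) (isCompact_Icc (a := 0) (b := 1 / 2))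
  have hM : 0 ≤ M := (abs_nonneg _).trans (hMK.abs_le 0 (by norm_num))
  refine ⟨2 * M + |K|, fun i => ?_⟩
  have hfirst := boundedLipschitzOn_kummerCoeff_one_sub
    (b := b + m + 1) (le_add_of_nonneg_left (by positivity)) i
  have hscale := (boundedLipschitzOn_div_add hN).pow_one (i + (m + 1))
  refine ((hMK.mul (hfirst.mono (Icc_subset_Icc_right (by norm_num)) le_rfl le_rfl)).mul
    (hscale.mono Icc_subset_Ici_self le_rfl le_rfl)).mono subset_rfl ?_ ?_
  all_goals
    have hMm : 0 ≤ M * m := by positivity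
    have hMi : 0 ≤ M * i := by positivity
    have hKm : 0 ≤ |K| * m := by positivity
    have hKi : 0 ≤ |K| * i := by positivity
    push_cast
    linarith [le_abs_self K, abs_nonneg K]

lemma kummerTail_mul (m : ℕ) (b η z t : ℝ) : kummerTail m b η (z * t) =
    ∑' i, kummerTailCoeff m b η i * t ^ (i + (m + 1)) * (z ^ (i + (m + 1)) / (i + (m + 1))!) :=
  tsum_congr fun i => by rw [mul_pow]; ring

lemma summable_kummerTail_mul (hb : 0 ≤ b) (m : ℕ) (hN : 1 ≤ N) (hη : η ∈ Icc 0 (1 / 2))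
    (hz : 0 ≤ z) : Summable fun i : ℕ => kummerTailCoeff m b η i * (N / (N + η)) ^ (i + (m + 1))
      * (z ^ (i + (m + 1)) / (i + (m + 1))!) :=
  have ⟨_, hL⟩ := exists_boundedLipschitzOn_kummerTailCoeff hb m hN
  (abs_tsum_shifted_le (fun i => (hL i).abs_le η hη) hz).1

lemma exists_lipschitz_kummerTail (hb : 0 ≤ b) (m : ℕ) (hN : 1 ≤ N) :
    ∃ C, ∀ z, 1 ≤ z → ∀ x ∈ Icc (0 : ℝ) (1 / 2), ∀ y ∈ Icc (0 : ℝ) (1 / 2),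
      |kummerTail m b x (z * (N / (N + x))) - kummerTail m b y (z * (N / (N + y)))|
        ≤ C * (z * Real.exp z) * |x - y| := by
  obtain ⟨L, hL⟩ := exists_boundedLipschitzOn_kummerTailCoeff hb m hN
  have hL0 : 0 ≤ L := nonneg_of_mul_nonneg_left
    ((abs_nonneg _).trans ((hL 0).abs_le 0 (by norm_num))) (by positivity)
  refine ⟨2 * L, fun z hz x hx y hy => ?_⟩
  have hz0 : 0 ≤ z := zero_le_one.trans hz
  rw [kummerTail_mul, kummerTail_mul, ← (summable_kummerTail_mul hb m hN hx hz0).tsum_sub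
    (summable_kummerTail_mul hb m hN hy hz0)]
  simp only [← sub_mul]
  calc _ ≤ L * |x - y| * ((z + 1) * Real.exp z) :=
        (abs_tsum_shifted_le (fun i => ((hL i).abs_sub_le x hx y hy).trans_eq (by ring)) hz0).2
    _ ≤ L * |x - y| * ((z + z) * Real.exp z) := by gcongr
    _ = 2 * L * (z * Real.exp z) * |x - y| := by ring

lemma exists_le_kummerTail (hb : 0 < b) (m i : ℕ) (hN : 1 ≤ N) :
    ∃ c > 0, ∀ z, 0 ≤ z → ∀ η ∈ Icc (0 : ℝ) (1 / 2),
      c * z ^ (i + (m + 1)) ≤ kummerTail m b η (z * (N / (N + η))) := by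
  have hN0 : 0 < N := one_pos.trans_le hN
  have hpos (j : ℕ) {η : ℝ} (hη : η ∈ Icc 0 (1 / 2)) :
      0 < kummerTailCoeff m b η j * (N / (N + η)) ^ (j + (m + 1)) := by
    have hη0 : 0 ≤ η := hη.1
    have := kummerTailCoeff_pos hb m j (η := η) ⟨by linarith, by linarith [hη.2]⟩
    positivity
  have hcont : ContinuousOn (fun η => kummerTailCoeff m b η i * (N / (N + η)) ^ (i + (m + 1)))
      (Icc 0 (1 / 2)) :=
    (contDiff_kummerTailCoeff (n := 0) m b i).continuous.continuousOn.mul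
      ((continuousOn_const.div (by fun_prop) fun η hη => by linarith [hη.1]).pow _)
  obtain ⟨t, ht, hterm⟩ := isCompact_Icc.exists_forall_le' hcont fun η hη => hpos i hη
  refine ⟨t / (i + (m + 1))!, by positivity, fun z hz η hη => ?_⟩
  rw [kummerTail_mul]
  calc t / (i + (m + 1))! * z ^ (i + (m + 1))
      = t * (z ^ (i + (m + 1)) / (i + (m + 1))!) := by ring
    _ ≤ kummerTailCoeff m b η i * (N / (N + η)) ^ (i + (m + 1))
          * (z ^ (i + (m + 1)) / (i + (m + 1))!) := by gcongr; exact hterm η hη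
    _ ≤ _ := (summable_kummerTail_mul hb.le m hN hη hz).le_tsum i fun j _ =>
        mul_nonneg (hpos j hη).le (by positivity)

lemma exists_abs_factorial_ratio_sub_one_le (c N : ℕ) : ∃ D : ℝ, ∀ i : ℕ,
    |(i ! * (i + N + c)! : ℝ) / ((c + i)! * (i + N)!) - 1| ≤ D / (i + 1) := by
  induction N with
  | zero =>
    refine ⟨0, fun i => ?_⟩
    rw [add_zero, add_comm c i, mul_comm, div_self (by positivity)]
    simp
  | succ N ih =>
    obtain ⟨D, hD⟩ := ih
    refine ⟨D * (1 + c) + c, fun i => ?_⟩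
    set ρ : ℝ := i ! * (i + N + c)! / ((c + i)! * (i + N)!)
    have hstep : (i ! * (i + (N + 1) + c)! : ℝ) / ((c + i)! * (i + (N + 1))!) - 1 =
        (ρ - 1) * (1 + c / (i + N + 1)) + c / (i + N + 1) := by
      rw [show i + (N + 1) + c = (i + N + c) + 1 by ring, ← add_assoc, Nat.factorial_succ,
        Nat.factorial_succ]
      push_cast
      simp only [ρ]
      field_simp
      ring
    have hc : (c : ℝ) / (i + N + 1) ≤ c / (i + 1) := by
      gcongr
      exact le_add_of_nonneg_right N.cast_nonneg
    have hc' : (c : ℝ) / (i + N + 1) ≤ c := div_le_self (by positivity)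
      (le_add_of_nonneg_left (by positivity))
    calc _ ≤ |ρ - 1| * (1 + c / (i + N + 1)) + c / (i + N + 1) := by
          rw [hstep]
          refine (abs_add_le _ _).trans_eq ?_
          rw [abs_mul, abs_of_nonneg (a := 1 + (c : ℝ) / (i + N + 1)) (by positivity),
            abs_of_nonneg (a := (c : ℝ) / (i + N + 1)) (by positivity)]
      _ ≤ D / (i + 1) * (1 + c) + c / (i + 1) := by
          gcongr
          exacts [(abs_nonneg _).trans (hD i), hD i]
      _ = (D * (1 + c) + c) / (i + 1) := by ring

lemma exists_abs_kummerTail_zero_sub_le (m b : ℕ) : ∃ C : ℝ, ∀ w : ℝ, 0 < w →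
    |kummerTail m (b + 1) 0 w * w ^ (b + 1 + m) - m ! * b ! * Real.exp w|
      ≤ C * (Real.exp w / w) := by
  obtain ⟨D, hD⟩ := exists_abs_factorial_ratio_sub_one_le (b + 1 + m) (m + 1)
  set s := m + 1 + (b + 1 + m) with hs
  refine ⟨m ! * b ! * (D * (s + 1) + s), fun w hw => ?_⟩
  have hseries : kummerTail m (b + 1) 0 w * w ^ (b + 1 + m) = m ! * b ! *
      ∑' i : ℕ, (i ! * (i + (m + 1) + (b + 1 + m))! : ℝ) / ((b + 1 + m + i)! * (i + (m + 1))!)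
        * (w ^ (i + s) / (i + s)!) := by
    rw [kummerTail, ← tsum_mul_right, ← tsum_mul_left]
    refine tsum_congr fun i => ?_
    rw [kummerTailCoeff_zero, hs, ← add_assoc i (m + 1) (b + 1 + m), pow_add w (i + (m + 1))]
    field_simp
  rw [hseries, ← mul_sub, abs_mul, abs_of_nonneg (by positivity), mul_assoc (_ * _ : ℝ) (D * _ + _)]
  gcongr
  exact abs_tsum_shifted_sub_exp_le hD s hw

end TailEstimates

section KummerRoot

open scoped Nat

variable {b N : ℝ}

lemma half_le_div_add {η : ℝ} (hN : 1 ≤ N) (hη : η ∈ Icc (-(1 / 2)) (1 / 2)) :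
    1 / 2 ≤ N / (N + η) := by
  rw [le_div_iff₀ (by linarith [hη.1])]
  linarith [hη.2]

lemma eventually_forall_mul_div_add {p : ℝ → ℝ → Prop} (hN : 1 ≤ N)
    (hp : ∀ᶠ w in atTop, ∀ η ∈ Icc (-(1 / 2)) (1 / 2), p η w) :
    ∀ᶠ z in atTop, ∀ η ∈ Icc (-(1 / 2)) (1 / 2), p η (z * (N / (N + η))) := by
  obtain ⟨w₀, hw₀⟩ := eventually_atTop.1 hp
  filter_upwards [eventually_ge_atTop 0, eventually_ge_atTop (2 * w₀)] with z hz hzw η hη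
  refine hw₀ _ ?_ η hη
  nlinarith [half_le_div_add hN hη]

lemma exists_rootBounds_kummer (m b : ℕ) (hN : 1 ≤ N) : ∃ C > 0, ∃ c > 0, ∀ᶠ z in atTop,
    RootBounds (fun η => kummerHead m (b + 1) η (z * (N / (N + η))))
      (fun η => kummerTail m (b + 1) η (z * (N / (N + η)))) m (b + 1 + m) (1 / 2)
      (b ! / (b + m)!) (m ! * b !) C c z := by
  have hb : (0 : ℝ) < b + 1 := by positivity
  obtain ⟨C₁, hhead⟩ := exists_boundedLipschitzOn_kummerHead m (b + 1) hN
  obtain ⟨C₂, hhead₀⟩ := exists_abs_kummerHead_zero_sub_le m b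
  obtain ⟨C₃, htail⟩ := exists_lipschitz_kummerTail hb.le m hN
  obtain ⟨C₄, htail₀⟩ := exists_abs_kummerTail_zero_sub_le m b
  obtain ⟨c, hc, hle⟩ := exists_le_kummerTail hb m (b + 1 + m + 1) hN
  set C := max (max C₁ C₂) (max C₃ (max C₄ 1))
  refine ⟨C, by simp [C], c, hc, ?_⟩
  filter_upwards [eventually_ge_atTop 1,
    eventually_forall_mul_div_add hN (eventually_kummerHead_pos hb m)] with z hz hpos
  have hz0 : 0 < z := one_pos.trans_le hz
  have hzero : z * (N / (N + 0)) = z := by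
    rw [add_zero, div_self (one_pos.trans_le hN).ne', mul_one]
  have hbl := (hhead z hz).mono (M' := C * z ^ m) (K' := C * z ^ m) subset_rfl
    (by gcongr; simp [C]) (by gcongr; simp [C])
  refine ⟨fun η hη => hpos η ⟨by linarith [hη.1], hη.2⟩,
    fun η hη => (le_abs_self _).trans (hbl.abs_le η hη), hbl.abs_sub_le,
    fun x hx y hy => (htail z hz x hx y hy).trans (by gcongr; simp [C]),
    fun η hη => ?_, ?_, ?_⟩
  · convert hle z hz0.le η hη using 3
    ring
  · rw [hzero]
    exact (htail₀ z hz0).trans (by gcongr; simp [C])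
  · rw [hzero]
    exact (hhead₀ z hz).trans (by gcongr; simp [C])

lemma eventually_kummerM_ne_zero (hb : 0 < b) (m : ℕ) :
    ∀ᶠ w in atTop, ∀ η ∈ Icc (-(1 / 2)) (1 / 2), η ≤ 0 → kummerM (-m - η) b w ≠ 0 := by
  filter_upwards [eventually_ge_atTop 0, eventually_kummerHead_pos hb m] with w hw hhead η hη hη0
  rw [Ne, kummerM_eq_zero_iff hb]
  have htail := kummerTail_nonneg hb m (η := η) ⟨by linarith [hη.1], by linarith⟩ hw
  exact ((mul_nonpos_of_nonpos_of_nonneg hη0 htail).trans_lt (hhead η hη)).ne'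

/-- The leading term `z ^ (2 m + b + 1) exp (-z) / (m! (b + m)!)` of the root `η` of
`M(-m - η, b + 1, w) = 0` close to `0`. -/
noncomputable def kummerRootLead (m b : ℕ) (z : ℝ) : ℝ :=
  1 / (m ! * (b + m)!) * (z ^ (2 * m + b + 1) * Real.exp (-z))

lemma kummerRootLead_pos (m b : ℕ) {z : ℝ} (hz : 0 < z) : 0 < kummerRootLead m b z := by
  unfold kummerRootLead
  positivity

theorem eventually_exists_unique_kummer_root (m b : ℕ) (hN : 1 ≤ N) :
    ∃ D > 0, ∀ᶠ z in atTop, ∃ η ∈ Ioo (0 : ℝ) (1 / 2),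
      (∀ η' ∈ Icc (-(1 / 2) : ℝ) (1 / 2),
        kummerM (-m - η') (b + 1) (z * (N / (N + η'))) = 0 ↔ η' = η) ∧
      |η - kummerRootLead m b z| ≤ D / z * kummerRootLead m b z := by
  have hb : (0 : ℝ) < b + 1 := by positivity
  obtain ⟨C, hC, c, hc, hbounds⟩ := exists_rootBounds_kummer m b hN
  obtain ⟨D, hD, hroot⟩ := eventually_exists_unique_root (by norm_num) (by positivity) hC hc hbounds
  refine ⟨D * (m ! * (b + m)!), by positivity, ?_⟩
  filter_upwards [hroot, eventually_forall_mul_div_add hN (eventually_kummerM_ne_zero hb m)]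
    with z ⟨η, hη, hηroot, hest, huniq⟩ hne
  refine ⟨η, hη, fun η' hη' => ⟨fun hzero => ?_, ?_⟩, ?_⟩
  · have hpos : 0 ≤ η' := le_of_not_ge fun hneg => hne η' hη' hneg hzero
    exact huniq η' ⟨hpos, hη'.2⟩ ((kummerM_eq_zero_iff hb _ _ _).1 hzero)
  · rintro rfl
    exact (kummerM_eq_zero_iff hb _ _ _).2 hηroot
  · rw [show m + (b + 1 + m) = 2 * m + b + 1 by ring] at hest
    unfold kummerRootLead
    rw [show (b ! / (b + m)! / (m ! * b !) : ℝ) = 1 / (m ! * (b + m)!) by field_simp] at hest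
    refine hest.trans_eq ?_
    field_simp

end KummerRoot

section Counting

variable {S : Set ℝ} {m : ℕ}

lemma IsNthEig.le {a b : ℝ} (ha : IsNthEig S m a) (hb : IsNthEig S m b) : a ≤ b := by
  by_contra! hba
  have hssubset : {x ∈ S | x < b} ⊂ {x ∈ S | x < a} :=
    ⟨fun x hx => ⟨hx.1, hx.2.trans hba⟩, fun hsub => lt_irrefl b (hsub ⟨hb.1, hba⟩).2⟩
  have hcard := ncard_lt_ncard hssubset ha.2.1
  rw [ha.2.2, hb.2.2] at hcard
  exact lt_irrefl m hcard

lemma IsNthEig.unique {a b : ℝ} (ha : IsNthEig S m a) (hb : IsNthEig S m b) : a = b :=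
  (ha.le hb).antisymm (hb.le ha)

lemma isNthEig_of_strictMonoOn {e : ℕ → ℝ} (he : StrictMonoOn e (Iic m))
    (hS : ∀ x ≤ e m, x ∈ S ↔ ∃ j ≤ m, x = e j) : IsNthEig S m (e m) := by
  have hbelow : {x ∈ S | x < e m} = e '' Iio m := by
    ext x
    constructor
    · rintro ⟨hxS, hx⟩
      obtain ⟨j, hj, rfl⟩ := (hS x hx.le).1 hxS
      exact ⟨j, (he.lt_iff_lt hj self_mem_Iic).1 hx, rfl⟩
    · rintro ⟨j, hj, rfl⟩
      have hlt := he (mem_Iic.2 (le_of_lt hj)) self_mem_Iic hj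
      exact ⟨(hS _ hlt.le).2 ⟨j, le_of_lt hj, rfl⟩, hlt⟩
  refine ⟨(hS _ le_rfl).2 ⟨m, le_rfl, rfl⟩, ?_, ?_⟩
  · rw [hbelow]
    exact (finite_Iio m).image e
  · rw [hbelow, (he.injOn.mono Iio_subset_Iic_self).ncard_image, ← Nat.card_coe_set_eq]
    simp

lemma exists_nat_abs_sub_le_half {x : ℝ} (hx : -(1 / 2) < x) : ∃ j : ℕ, |x - j| ≤ 1 / 2 := by
  have hround := abs_sub_round x
  have hnonneg : 0 ≤ round x := by
    have : (-1 : ℝ) < round x := by linarith [(abs_le.1 hround).2]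
    exact Int.le_of_sub_one_lt (by exact_mod_cast this)
  lift round x to ℕ using hnonneg with j
  exact ⟨j, by exact_mod_cast hround⟩

end Counting

section QuantumNumbers

lemma isEffectiveQuantumNumber_add_iff {ℓ j : ℕ} {X η : ℝ} :
    IsEffectiveQuantumNumber ℓ X (j + ℓ + 1 + η) ↔
      kummerM (-j - η) ((2 * ℓ + 1 : ℕ) + 1)
        (X / (j + ℓ + 1) * ((j + ℓ + 1) / (j + ℓ + 1 + η))) = 0 := by
  rw [IsEffectiveQuantumNumber, div_mul_div_cancel₀ (by positivity)]
  congr! 2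
  · ring
  · push_cast
    ring

lemma IsEffectiveQuantumNumber.lt {ℓ : ℕ} {X ν : ℝ} (hX : 0 ≤ X) (hν : 0 < ν)
    (h : IsEffectiveQuantumNumber ℓ X ν) : ℓ + 1 < ν := by
  by_contra! hle
  exact (kummerM_pos_of_nonneg (sub_nonneg.2 hle) (by positivity) (by positivity)).ne' h

theorem eventually_isEffectiveQuantumNumber_iff (ℓ m : ℕ) : ∃ D > 0, ∀ᶠ X in atTop, ∃ η : ℕ → ℝ,
    (∀ j ≤ m, η j ∈ Ioo (0 : ℝ) (1 / 2)) ∧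
    (∀ ν ∈ Ioo (0 : ℝ) (m + ℓ + 1 + 1 / 2),
      IsEffectiveQuantumNumber ℓ X ν ↔ ∃ j ≤ m, ν = j + ℓ + 1 + η j) ∧
    |η m - kummerRootLead m (2 * ℓ + 1) (X / (m + ℓ + 1))|
      ≤ D / (X / (m + ℓ + 1)) * kummerRootLead m (2 * ℓ + 1) (X / (m + ℓ + 1)) := by
  choose D hD hroot using fun j : ℕ => eventually_exists_unique_kummer_root j (2 * ℓ + 1)
    (N := j + ℓ + 1) (le_add_of_nonneg_left (by positivity))
  refine ⟨D m, hD m, ?_⟩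
  have hall : ∀ᶠ X : ℝ in atTop, ∀ j ∈ Iic m, _ := (eventually_all_finite (finite_Iic m)).2
    fun j _ => (tendsto_id.atTop_div_const (by positivity : (0 : ℝ) < j + ℓ + 1)).eventually
      (hroot j)
  filter_upwards [eventually_ge_atTop 0, hall] with X hX hwindow
  choose! η hη hiff hest using hwindow
  simp only [id_eq, ← isEffectiveQuantumNumber_add_iff] at hiff
  refine ⟨η, hη, fun ν hν => ⟨fun hquant => ?_, ?_⟩, hest m self_mem_Iic⟩
  · have hlt := hquant.lt hX hν.1
    obtain ⟨j, hj⟩ := exists_nat_abs_sub_le_half (x := ν - (ℓ + 1)) (by linarith)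
    rw [abs_le] at hj
    have hjm : j ≤ m := Nat.lt_succ_iff.1 (by exact_mod_cast (by linarith [hν.2] : (j : ℝ) < m + 1))
    refine ⟨j, hjm, ?_⟩
    rw [← (hiff j hjm (ν - (j + ℓ + 1)) ⟨by linarith, by linarith⟩).1 (by simpa using hquant)]
    ring
  · rintro ⟨j, hj, rfl⟩
    exact (hiff j hj _ ⟨by linarith [(hη j hj).1], (hη j hj).2.le⟩).2 rfl

lemma isNthEig_coulombEnergy {Z h R : ℝ} {ℓ m : ℕ} {ν : ℕ → ℝ} (hZ : 0 < Z) (hh : 0 < h)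
    (hR : 0 < R) (hν : StrictMonoOn ν (Iic m)) (hpos : ∀ j ≤ m, 0 < ν j)
    (hquant : ∀ μ ∈ Ioc 0 (ν m),
      IsEffectiveQuantumNumber ℓ (Z * R / h ^ 2) μ ↔ ∃ j ≤ m, μ = ν j) :
    IsNthEig {E | IsEigCoulombConfined Z ℓ h R E} m (coulombEnergy Z h (ν m)) := by
  have hmono := strictMonoOn_coulombEnergy hZ.ne' hh.ne'
  refine isNthEig_of_strictMonoOn (e := coulombEnergy Z h ∘ ν)
    (hmono.comp hν fun j hj => hpos j hj) fun E hE => ?_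
  have hE0 : E < 0 := hE.trans_lt (coulombEnergy_neg hZ.ne' hh.ne' (hpos m le_rfl).ne')
  obtain ⟨μ, hμ, rfl⟩ := surjOn_coulombEnergy hZ hh hE0
  have hμm : μ ≤ ν m := (hmono.le_iff_le hμ (hpos m le_rfl)).1 hE
  rw [mem_ofPred_eq, isEigCoulombConfined_coulombEnergy_iff hZ.ne' hh.ne' hR (ne_of_gt hμ),
    hquant μ ⟨hμ, hμm⟩]
  exact exists_congr fun j => and_congr_right fun hj =>
    (hmono.injOn.eq_iff hμ (hpos j hj)).symm

end QuantumNumbers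

section Shift

open scoped Nat

lemma abs_coulombEnergy_sub_sub_le {N η : ℝ} (Z h : ℝ) (hN : 1 ≤ N) (hη : 0 ≤ η) :
    |coulombEnergy Z h (N + η) - coulombEnergy Z h N - Z ^ 2 / (2 * h ^ 2 * N ^ 3) * η|
      ≤ Z ^ 2 / (2 * h ^ 2 * N ^ 3) * (3 * η ^ 2) := by
  have hN0 : 0 < N := one_pos.trans_le hN
  have hremainder : coulombEnergy Z h (N + η) - coulombEnergy Z h N
      - Z ^ 2 / (2 * h ^ 2 * N ^ 3) * η
      = -(Z ^ 2 / (2 * h ^ 2 * N ^ 3) * (η ^ 2 * ((3 * N + 2 * η) / (2 * (N + η) ^ 2)))) := by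
    rcases eq_or_ne h 0 with rfl | hh
    · simp [coulombEnergy]
    · unfold coulombEnergy
      field_simp
      ring
  have hfactor : (3 * N + 2 * η) / (2 * (N + η) ^ 2) ≤ 3 := by
    rw [div_le_iff₀ (by positivity)]
    nlinarith
  rw [hremainder, abs_neg, abs_of_nonneg (by positivity), mul_comm 3 (η ^ 2)]
  gcongr

lemma kummerRootLead_le (m b : ℕ) {z : ℝ} (hz : 0 < z) :
    kummerRootLead m b z ≤ (2 * m + b + 2)! / z := by
  have hfact : (1 : ℝ) ≤ m ! * (b + m)! := by
    exact_mod_cast Nat.mul_pos m.factorial_pos (b + m).factorial_pos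
  have hexp := Real.pow_div_factorial_le_exp z hz.le (2 * m + b + 2)
  rw [div_le_iff₀ (by positivity)] at hexp
  calc kummerRootLead m b z ≤ 1 * (z ^ (2 * m + b + 1) * Real.exp (-z)) := by
        unfold kummerRootLead
        gcongr
        exact div_le_one_of_le₀ hfact (by positivity)
    _ = z ^ (2 * m + b + 2) / Real.exp z / z := by
        rw [Real.exp_neg]
        field_simp
        ring
    _ ≤ (2 * m + b + 2)! / z := by
        gcongr
        rw [div_le_iff₀ (Real.exp_pos z)]
        linarith

lemma abs_sub_const_mul_le {x κ η t z D G : ℝ} (hκ : 0 ≤ κ) (hη : 0 ≤ η) (ht : 0 ≤ t) (hz : 1 ≤ z)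
    (hD : 0 ≤ D) (htz : t ≤ G / z) (hηt : |η - t| ≤ D / z * t)
    (hx : |x - κ * η| ≤ κ * (3 * η ^ 2)) :
    |x - κ * t| ≤ (D + 3 * (1 + D) ^ 2 * G) / z * (κ * t) := by
  have hη_le : η ≤ (1 + D) * t := by
    have : D / z * t ≤ D * t := by
      gcongr
      exact div_le_self hD hz
    linarith [(abs_le.1 hηt).2]
  have hη_sq : η ^ 2 ≤ (1 + D) ^ 2 * (G / z) * t :=
    calc η ^ 2 ≤ ((1 + D) * t) ^ 2 := by gcongr
      _ = (1 + D) ^ 2 * t * t := by ring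
      _ ≤ (1 + D) ^ 2 * (G / z) * t := by gcongr
  calc |x - κ * t| = |(x - κ * η) + κ * (η - t)| := by ring_nf
    _ ≤ |x - κ * η| + κ * |η - t| := by
        refine (abs_add_le _ _).trans_eq ?_
        rw [abs_mul κ, abs_of_nonneg hκ]
    _ ≤ κ * (3 * ((1 + D) ^ 2 * (G / z) * t)) + κ * (D / z * t) := by
        gcongr
        exact hx.trans (by gcongr)
    _ = (D + 3 * (1 + D) ^ 2 * G) / z * (κ * t) := by ring

/-- The first-order change `∂E/∂ν · η` of the energy at `ν = m + ℓ + 1`, where `η` is the leading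
term of the shift of the effective quantum number. -/
noncomputable def coulombShiftLead (Z : ℝ) (ℓ m : ℕ) (h R : ℝ) : ℝ :=
  Z ^ 2 / (2 * h ^ 2 * (m + ℓ + 1) ^ 3) *
    kummerRootLead m (2 * ℓ + 1) (Z * R / h ^ 2 / (m + ℓ + 1))

theorem eventually_exists_isNthEig (ℓ m : ℕ) : ∃ C > 0, ∀ᶠ X in atTop, ∀ Z h R : ℝ,
    0 < Z → 0 < h → 0 < R → Z * R / h ^ 2 = X →
    ∃ E, IsNthEig {E | IsEigCoulombConfined Z ℓ h R E} m E ∧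
      |E - coulombEnergy Z h (m + ℓ + 1) - coulombShiftLead Z ℓ m h R|
        ≤ C / X * coulombShiftLead Z ℓ m h R := by
  obtain ⟨D, hD, hquant⟩ := eventually_isEffectiveQuantumNumber_iff ℓ m
  set N : ℝ := m + ℓ + 1
  have hN : 1 ≤ N := le_add_of_nonneg_left (by positivity)
  have hN0 : 0 < N := one_pos.trans_le hN
  set K : ℝ := D + 3 * (1 + D) ^ 2 * (2 * m + (2 * ℓ + 1) + 2)!
  refine ⟨K * N, by positivity, ?_⟩
  filter_upwards [eventually_ge_atTop N, hquant] with X hX ⟨η, hη, hiff, hest⟩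
  rintro Z h R hZ hh hR rfl
  have hη0 : ∀ j ≤ m, 0 < η j := fun j hj => (hη j hj).1
  have hz : 1 ≤ Z * R / h ^ 2 / N := (one_le_div hN0).2 hX
  have hz0 := one_pos.trans_le hz
  refine ⟨coulombEnergy Z h (N + η m), isNthEig_coulombEnergy (ν := fun j => j + ℓ + 1 + η j)
    hZ hh hR (fun i hi j hj hij => ?_) (fun j hj => ?_) fun μ hμ => ?_, ?_⟩
  · have : (i : ℝ) + 1 ≤ j := by exact_mod_cast hij
    change (i : ℝ) + ℓ + 1 + η i < j + ℓ + 1 + η j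
    linarith [(hη i hi).2, hη0 j hj]
  · have := hη0 j hj
    positivity
  · exact hiff μ ⟨hμ.1, hμ.2.trans_lt (by linarith [(hη m le_rfl).2])⟩
  · have := abs_sub_const_mul_le (by positivity) (hη0 m le_rfl).le (kummerRootLead_pos _ _ hz0).le
      hz hD.le (kummerRootLead_le _ _ hz0) hest
      (abs_coulombEnergy_sub_sub_le Z h hN (hη0 m le_rfl).le)
    rwa [div_div_eq_mul_div _ (Z * R / h ^ 2) N] at this

lemma coulombShiftLead_eq {h : ℝ} {ℓ n : ℕ} (Z R : ℝ) (hh : 0 < h) (hn : ℓ + 1 ≤ n) :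
    coulombShiftLead Z ℓ (n - ℓ - 1) h R =
      2 ^ (2 * n + 1) * h ^ (-4 * (n : ℝ) - 2) * R ^ (2 * n) /
          ((n : ℝ) ^ (2 * n + 3) * (n - ℓ - 1)! * (n + ℓ)!) *
        (Z / 2) ^ (2 * n + 2) * Real.exp (-Z * R / (n * h ^ 2)) := by
  obtain ⟨m, rfl⟩ : ∃ m, n = m + ℓ + 1 := ⟨n - ℓ - 1, by lia⟩
  rw [show m + ℓ + 1 - ℓ - 1 = m by lia, coulombShiftLead, kummerRootLead,
    show 2 * m + (2 * ℓ + 1) + 1 = 2 * (m + ℓ + 1) by ring,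
    show 2 * ℓ + 1 + m = m + ℓ + 1 + ℓ by ring,
    show (m + ℓ + 1 : ℝ) = (m + ℓ + 1 : ℕ) by push_cast; rfl]
  set n := m + ℓ + 1
  have hn0 : (n : ℝ) ≠ 0 := by positivity
  have hrpow : h ^ (-4 * (n : ℝ) - 2) = (h ^ (2 * (2 * n)) * h ^ 2)⁻¹ := by
    rw [← pow_add, ← Real.rpow_natCast, ← Real.rpow_neg hh.le]
    push_cast
    ring_nf
  have hexp : -Z * R / (n * h ^ 2) = -(Z * R / h ^ 2 / n) := by field_simp
  rw [hrpow, hexp, pow_succ (Z / 2), pow_succ (Z / 2), div_pow, div_pow, div_pow, mul_pow,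
    ← pow_mul, pow_add (n : ℝ) (2 * n) 3]
  field_simp
  ring

end Shift

theorem confined_hydrogen_eigenvalue_shift_general
    (Z : ℝ) (hZ : 0 < Z) (ℓ n : ℕ) (hn : ℓ + 1 ≤ n) :
    ∃ C δ : ℝ, 0 < C ∧ 0 < δ ∧ ∀ h R : ℝ, 0 < h → 0 < R → h ^ 2 / R < δ →
      ∃ E, IsNthEig {E | IsEigCoulombConfined Z ℓ h R E} (n - ℓ - 1) E ∧
        |E + Z ^ 2 / (4 * n ^ 2 * h ^ 2) -
            2 ^ (2 * n + 1) * h ^ (-4 * (n : ℝ) - 2) * R ^ (2 * n) /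
              ((n : ℝ) ^ (2 * n + 3) * (Nat.factorial (n - ℓ - 1) : ℝ) *
                (Nat.factorial (n + ℓ) : ℝ)) *
              (Z / 2) ^ (2 * n + 2) * Real.exp (-Z * R / (n * h ^ 2))| ≤
          C * (h ^ 2 / R) *
            (2 ^ (2 * n + 1) * h ^ (-4 * (n : ℝ) - 2) * R ^ (2 * n) /
              ((n : ℝ) ^ (2 * n + 3) * (Nat.factorial (n - ℓ - 1) : ℝ) *
                (Nat.factorial (n + ℓ) : ℝ)) *
              (Z / 2) ^ (2 * n + 2) * Real.exp (-Z * R / (n * h ^ 2))) := by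
  obtain ⟨C, hC, hlevel⟩ := eventually_exists_isNthEig ℓ (n - ℓ - 1)
  obtain ⟨X₀, hX₀⟩ := eventually_atTop.1 (hlevel.and (eventually_gt_atTop 0))
  have hX₀pos : 0 < X₀ := (hX₀ X₀ le_rfl).2
  have hcast : ((n - ℓ - 1 : ℕ) + ℓ + 1 : ℝ) = n := by
    exact_mod_cast (by lia : n - ℓ - 1 + ℓ + 1 = n)
  refine ⟨C / Z, Z / X₀, by positivity, by positivity, fun h R hh hR hlt => ?_⟩
  have hX : X₀ ≤ Z * R / h ^ 2 := by
    rw [div_lt_div_iff₀ hR hX₀pos] at hlt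
    rw [le_div_iff₀ (by positivity)]
    linarith
  obtain ⟨E, hE, hest⟩ := (hX₀ _ hX).1 Z h R hZ hh hR rfl
  refine ⟨E, hE, ?_⟩
  rw [← coulombShiftLead_eq Z R hh hn]
  rw [hcast, coulombEnergy, sub_neg_eq_add] at hest
  refine hest.trans_eq ?_
  field_simp

theorem confined_hydrogen_eigenvalue_shift
    (Z : ℝ) (hZ : 0 < Z) (ℓ n : ℕ) (hn : ℓ + 1 ≤ n)
    -- `En h R` is the eigenvalue `E_n(R)` of `H_R(ℓ;h)`, i.e. the `(n-ℓ-1)`-th negative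
    -- eigenvalue in increasing order, assumed to exist for `h²/R` small
    (δ₀ : ℝ) (hδ₀ : 0 < δ₀)
    (En : ℝ → ℝ → ℝ)
    (hEn : ∀ h R : ℝ, 0 < h → 0 < R → h ^ 2 / R < δ₀ →
      IsNthEig {E | IsEigCoulombConfined Z ℓ h R E} (n - ℓ - 1) (En h R)) :
    ∃ C δ : ℝ, 0 < C ∧ 0 < δ ∧ ∀ h R : ℝ, 0 < h → 0 < R → h ^ 2 / R < δ →
      |En h R + Z ^ 2 / (4 * n ^ 2 * h ^ 2) -
          2 ^ (2 * n + 1) * h ^ (-4 * (n : ℝ) - 2) * R ^ (2 * n) /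
            ((n : ℝ) ^ (2 * n + 3) * (Nat.factorial (n - ℓ - 1) : ℝ) *
              (Nat.factorial (n + ℓ) : ℝ)) *
            (Z / 2) ^ (2 * n + 2) * Real.exp (-Z * R / (n * h ^ 2))| ≤
        C * (h ^ 2 / R) *
          (2 ^ (2 * n + 1) * h ^ (-4 * (n : ℝ) - 2) * R ^ (2 * n) /
            ((n : ℝ) ^ (2 * n + 3) * (Nat.factorial (n - ℓ - 1) : ℝ) *
              (Nat.factorial (n + ℓ) : ℝ)) *
            (Z / 2) ^ (2 * n + 2) * Real.exp (-Z * R / (n * h ^ 2))) := by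
  obtain ⟨C, δ, hC, hδ, hshift⟩ := confined_hydrogen_eigenvalue_shift_general Z hZ ℓ n hn
  refine ⟨C, min δ δ₀, hC, lt_min hδ hδ₀, fun h R hh hR hlt => ?_⟩
  obtain ⟨E, hE, hest⟩ := hshift h R hh hR (hlt.trans_le (min_le_left _ _))
  rwa [(hEn h R hh hR (hlt.trans_le (min_le_right _ _))).unique hE]
end

section
/- Let ν > 0, h > 0, 0 < L ≤ ∞, and let Z ⊆ ℝ be a connected open interval. Let B : [0, L) × Z → ℝ be jointly C^∞. Then there exists a jointly C^∞ function w : [0, L) × Z → ℝ with w(0, z) = 1 and ∂ₓw(0, z) = 0 for all z ∈ Z, such that for each z ∈ Z the function u(x) = x^{1/2+ν} w(x, z) satisfies −h²u'' + h²(ν² − 1/4)x⁻² u + B(x, z) u = 0 on (0, L). -/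
open MeasureTheory Set Filter

/-!
Write `ρ = 1 / 2 + ν`, `α = 2ρ` and `b = B / h²`. Since `ρ (ρ - 1) = ν² - 1 / 4`, the function
`u = x ^ ρ w` solves the equation as soon as `w'' + (α / x) w' = b w`. The operator
`Q_α g (x) = x ∫₀¹ t ^ α g (t x) dt` inverts `y ↦ y' + (α / x) y`, so it suffices that
`w = 1 + Q₀ (Q_α (b w))`. Rescaling `[0, x]` to `[0, 1]` turns this into an equation
`y = 1 + Q₀ (Q_α (β y))` in the fixed Banach algebra `C([0, 1])`, with `β t = x² b (t x, z)` and
`w (x, z) = y 1`. The powers of the Volterra operator `y ↦ Q₀ (Q_α (β y))` are `O(Cⁿ / n!)`, hence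
the equation is uniquely solvable and `y` depends smoothly on `β`; and `β` depends smoothly on
`(x, z)` because composition with a smooth function is a smooth operation on spaces of continuous
maps.
-/

open scoped Topology

section Superposition

universe u v w

variable {K : Type w} [TopologicalSpace K] {V : Type u} [NormedAddCommGroup V]

/-- The superposition (Nemytskii) operator `γ ↦ f ∘ γ` on spaces of continuous maps, with the junk
value `0` where `f ∘ γ` is not continuous. -/
noncomputable def superposition {F : Type v} [NormedAddCommGroup F] (f : V → F) (γ : C(K, V)) :
    C(K, F) :=
  ContinuousMap.mkD (f ∘ γ) 0

/-- The set of continuous maps `K → V` all of whose values lie in `S`. -/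
def mapsInto (K : Type w) [TopologicalSpace K] (S : Set V) : Set C(K, V) :=
  {γ | ∀ k, γ k ∈ S}

section Continuity

variable {F : Type v} [NormedAddCommGroup F] {f : V → F} {S : Set V} {γ : C(K, V)}

lemma superposition_apply (hf : ContinuousOn f S) (hγ : γ ∈ mapsInto K S) (k : K) :
    superposition f γ k = f (γ k) :=
  ContinuousMap.mkD_apply_of_continuous (hf.comp_continuous γ.continuous hγ)

lemma continuousOn_superposition [LocallyCompactSpace K] (hf : ContinuousOn f S) :
    ContinuousOn (superposition f) (mapsInto K S) := by
  rw [continuousOn_iff_continuous_domRestrict]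
  refine ContinuousMap.continuous_of_continuous_uncurry _ ?_
  have h_eval : Continuous fun q : mapsInto K S × K => q.1.1 q.2 := by fun_prop
  exact (hf.comp_continuous h_eval fun q => q.1.2 q.2).congr
    fun q => (superposition_apply hf q.1.2 q.2).symm

end Continuity

variable [NormedSpace ℝ V] {S : Set V} {γ η : C(K, V)}

lemma convex_mapsInto (hS : Convex ℝ S) : Convex ℝ (mapsInto K S) :=
  fun _ hγ _ hη _ _ ha hb hab k => hS (hγ k) (hη k) ha hb hab

variable [CompactSpace K]

lemma uniqueDiffOn_mapsInto (hS : Convex ℝ S) (hS' : (interior S).Nonempty) :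
    UniqueDiffOn ℝ (mapsInto K S) := by
  obtain ⟨v, hv⟩ := hS'
  have h_open : IsOpen {γ : C(K, V) | MapsTo γ univ (interior S)} :=
    ContinuousMap.isOpen_setOfPred_mapsTo isCompact_univ isOpen_interior
  have h_sub : {γ : C(K, V) | MapsTo γ univ (interior S)} ⊆ mapsInto K S :=
    fun _ hγ k => interior_subset (hγ (mem_univ k))
  exact uniqueDiffOn_convex (convex_mapsInto hS)
    ⟨.const K v, interior_maximal h_sub h_open fun _ _ => hv⟩

/-- The application of operators to vectors, pointwise over `K`. -/
noncomputable def pointwiseApply (K : Type w) [TopologicalSpace K] [CompactSpace K] (V : Type u)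
    [NormedAddCommGroup V] [NormedSpace ℝ V] (F : Type v) [NormedAddCommGroup F]
    [NormedSpace ℝ F] : C(K, V →L[ℝ] F) →L[ℝ] C(K, V) →L[ℝ] C(K, F) :=
  LinearMap.mkContinuous₂
    (LinearMap.mk₂ ℝ (fun (A : C(K, V →L[ℝ] F)) (γ : C(K, V)) =>
        (⟨fun k => A k (γ k), A.continuous.clm_apply γ.continuous⟩ : C(K, F)))
      (fun _ _ _ => by ext; simp) (fun _ _ _ => by ext; simp)
      (fun _ _ _ => by ext; simp) (fun _ _ _ => by ext; simp)) 1 fun A γ => by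
    refine (ContinuousMap.norm_le _ (by positivity)).2 fun k => ?_
    rw [one_mul]
    exact (A k).le_of_opNorm_le_of_le (A.norm_coe_le_norm k) (γ.norm_coe_le_norm k)

section Smoothness

variable {F : Type v} [NormedAddCommGroup F] [NormedSpace ℝ F] {f : V → F} {f' : V → V →L[ℝ] F}

lemma norm_superposition_sub_sub_le {ε δ : ℝ} (hS : Convex ℝ S)
    (hf : ∀ v ∈ S, HasFDerivWithinAt f (f' v) S v) (hf' : ContinuousOn f' S) (hε : 0 ≤ ε)
    (hγ : γ ∈ mapsInto K S) (hη : η ∈ mapsInto K S) (hηδ : dist η γ < δ)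
    (hδ : ∀ θ ∈ mapsInto K S, dist θ γ < δ →
      dist (superposition f' θ) (superposition f' γ) < ε) :
    ‖superposition f η - superposition f γ - pointwiseApply K V F (superposition f' γ) (η - γ)‖
      ≤ ε * ‖η - γ‖ := by
  have hfc : ContinuousOn f S := fun v hv => (hf v hv).continuousWithinAt
  refine (ContinuousMap.norm_le _ (by positivity)).2 fun k => ?_
  have h_seg : segment ℝ (γ k) (η k) ⊆ S := hS.segment_subset (hγ k) (hη k)
  have h_bound : ∀ v ∈ segment ℝ (γ k) (η k), ‖f' v - f' (γ k)‖ ≤ ε := by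
    rintro _ ⟨a, b, ha, hb, hab, rfl⟩
    obtain ⟨hθ, hθδ⟩ : a • γ + b • η ∈ mapsInto K S ∩ Metric.ball γ δ :=
      (convex_mapsInto hS).inter (convex_ball γ δ)
        ⟨hγ, Metric.mem_ball_self (dist_nonneg.trans_lt hηδ)⟩ ⟨hη, hηδ⟩ ha hb hab
    have h_dist := (ContinuousMap.dist_apply_le_dist k).trans (hδ _ hθ hθδ).le
    rwa [superposition_apply hf' hθ, superposition_apply hf' hγ, dist_eq_norm] at h_dist
  have h_mean : ‖f (η k) - f (γ k) - f' (γ k) (η k - γ k)‖ ≤ ε * ‖η k - γ k‖ :=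
    (convex_segment _ _).norm_image_sub_le_of_norm_hasFDerivWithin_le' (𝕜 := ℝ)
      (fun v hv => (hf v (h_seg hv)).mono h_seg) h_bound
      (left_mem_segment ℝ _ _) (right_mem_segment ℝ _ _)
  calc ‖(superposition f η - superposition f γ
          - pointwiseApply K V F (superposition f' γ) (η - γ)) k‖
      = ‖f (η k) - f (γ k) - f' (γ k) (η k - γ k)‖ := by
        rw [← superposition_apply hfc hη, ← superposition_apply hfc hγ,
          ← superposition_apply hf' hγ]; rfl
    _ ≤ ε * ‖η k - γ k‖ := h_mean
    _ ≤ ε * ‖η - γ‖ := by gcongr; exact (η - γ).norm_coe_le_norm k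

lemma hasFDerivWithinAt_superposition [LocallyCompactSpace K] (hS : Convex ℝ S)
    (hf : ∀ v ∈ S, HasFDerivWithinAt f (f' v) S v) (hf' : ContinuousOn f' S)
    (hγ : γ ∈ mapsInto K S) :
    HasFDerivWithinAt (superposition f) (pointwiseApply K V F (superposition f' γ))
      (mapsInto K S) γ := by
  rw [hasFDerivWithinAt_iff_isLittleO, Asymptotics.isLittleO_iff]
  intro ε hε
  obtain ⟨δ, hδ, h_close⟩ :=
    Metric.continuousWithinAt_iff.1 (continuousOn_superposition hf' γ hγ) ε hε
  filter_upwards [self_mem_nhdsWithin,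
    mem_nhdsWithin_of_mem_nhds (Metric.ball_mem_nhds γ hδ)] with η hη hηδ
  exact norm_superposition_sub_sub_le hS hf hf' hε.le hγ hη hηδ fun θ hθ => h_close hθ

end Smoothness

variable [LocallyCompactSpace K]

/-- The special case of `contDiffOn_superposition` in which the universe of the codomain is large
enough for the induction, which replaces `F` by `V →L[ℝ] F`. -/
lemma contDiffOn_superposition_of_max (hS : Convex ℝ S) (hS' : (interior S).Nonempty) (n : ℕ)
    {F : Type (max u v)} [NormedAddCommGroup F] [NormedSpace ℝ F] {f : V → F}
    (hf : ContDiffOn ℝ n f S) : ContDiffOn ℝ n (superposition f) (mapsInto K S) := by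
  induction n generalizing F with
  | zero => exact contDiffOn_zero.2 (continuousOn_superposition hf.continuousOn)
  | succ n ih =>
    have h_fderiv : ContDiffOn ℝ n (fderivWithin ℝ f S) S :=
      hf.fderivWithin (uniqueDiffOn_convex hS hS') (by norm_cast)
    have h_diff := hf.differentiableOn (by simp)
    rw [Nat.cast_succ, contDiffOn_succ_iff_hasFDerivWithinAt_of_uniqueDiffOn
      (uniqueDiffOn_mapsInto hS hS')]
    refine ⟨by simp, fun γ => pointwiseApply K V F (superposition (fderivWithin ℝ f S) γ), ?_, ?_⟩
    · exact (pointwiseApply K V F).contDiff.comp_contDiffOn (ih h_fderiv)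
    · exact fun γ hγ => hasFDerivWithinAt_superposition hS
        (fun v hv => (h_diff v hv).hasFDerivWithinAt) h_fderiv.continuousOn hγ

lemma contDiffOn_superposition (hS : Convex ℝ S) (hS' : (interior S).Nonempty) (n : ℕ)
    {F : Type v} [NormedAddCommGroup F] [NormedSpace ℝ F] {f : V → F}
    (hf : ContDiffOn ℝ n f S) : ContDiffOn ℝ n (superposition f) (mapsInto K S) := by
  let down : ULift.{u} F ≃L[ℝ] F := ContinuousLinearEquiv.ulift
  have h_lift : ContDiffOn ℝ n (down.symm ∘ f) S := down.symm.contDiff.comp_contDiffOn hf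
  refine ((down : ULift.{u} F →L[ℝ] F).compLeftContinuous ℝ K).contDiff.comp_contDiffOn
    (contDiffOn_superposition_of_max hS hS' n h_lift) |>.congr fun γ hγ => ?_
  ext k
  rw [superposition_apply hf.continuousOn hγ]
  exact congrArg down (superposition_apply h_lift.continuousOn hγ k).symm

end Superposition

section WeightedPrimitive

variable {F : Type*} [NormedAddCommGroup F] [NormedSpace ℝ F] {α : ℝ} {f g : ℝ → F} {x R : ℝ}

/-- The solution `y` of `y' + (α / x) y = g` with `y 0 = 0`. It equals `x ^ (-α) ∫₀ˣ s ^ α g(s) ds`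
for `x > 0`; the rescaled form makes sense at `x = 0` and commutes with dilations of `x`. -/
noncomputable def weightedPrimitive (α : ℝ) (g : ℝ → F) (x : ℝ) : F :=
  x • ∫ t in (0 : ℝ)..1, t ^ α • g (t * x)

lemma weightedPrimitive_eq_rpow_smul_integral (α : ℝ) (g : ℝ → F) (hx : 0 < x) :
    weightedPrimitive α g x = x ^ (-α) • ∫ s in (0 : ℝ)..x, s ^ α • g s := by
  have h_weight : ∫ t in (0 : ℝ)..1, t ^ α • g (t * x) =
      ∫ t in (0 : ℝ)..1, x ^ (-α) • (t * x) ^ α • g (t * x) := by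
    refine intervalIntegral.integral_congr fun t ht => ?_
    rw [uIcc_of_le zero_le_one] at ht
    rw [smul_smul, Real.mul_rpow ht.1 hx.le, mul_left_comm, ← Real.rpow_add hx, neg_add_cancel,
      Real.rpow_zero, mul_one]
  rw [weightedPrimitive, h_weight, intervalIntegral.integral_smul, smul_comm]
  simpa using congrArg (x ^ (-α) • ·) (intervalIntegral.smul_integral_comp_mul_right
    (a := 0) (b := 1) (fun s => s ^ α • g s) x)

lemma hasDerivAt_weightedPrimitive [CompleteSpace F] (hα : -1 < α)
    (hg : ContinuousOn g (Icc 0 R)) (hx : x ∈ Ioo 0 R) :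
    HasDerivAt (weightedPrimitive α g) (g x - (α / x) • weightedPrimitive α g x) x := by
  have hg_Icc : ContinuousOn g (uIcc 0 x) := by
    rw [uIcc_of_le hx.1.le]
    exact hg.mono (Icc_subset_Icc_right hx.2.le)
  have h_cont : ContinuousOn (fun s => s ^ α • g s) (Ioo 0 R) :=
    (continuousOn_id.rpow_const fun s hs => .inl hs.1.ne').smul (hg.mono Ioo_subset_Icc_self)
  have h_int : HasDerivAt (fun y => ∫ s in (0 : ℝ)..y, s ^ α • g s) (x ^ α • g x) x :=
    intervalIntegral.integral_hasDerivAt_right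
      ((intervalIntegral.intervalIntegrable_rpow' hα).smul_continuousOn hg_Icc)
      (h_cont.stronglyMeasurableAtFilter isOpen_Ioo x hx)
      (h_cont.continuousAt (isOpen_Ioo.mem_nhds hx))
  have h_prod := (Real.hasDerivAt_rpow_const (p := -α) (.inl hx.1.ne')).smul h_int
  refine (h_prod.congr_of_eventuallyEq ?_).congr_deriv ?_
  · filter_upwards [eventually_gt_nhds hx.1] with y hy
    exact weightedPrimitive_eq_rpow_smul_integral α g hy
  · rw [weightedPrimitive_eq_rpow_smul_integral α g hx.1, smul_smul, ← Real.rpow_add hx.1,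
      neg_add_cancel, Real.rpow_zero, Real.rpow_sub_one hx.1.ne']
    module

lemma weightedPrimitive_add (hα : -1 < α) (hf : Continuous f) (hg : Continuous g) :
    weightedPrimitive α (f + g) = weightedPrimitive α f + weightedPrimitive α g := by
  ext x
  have h_int : ∀ {h : ℝ → F}, Continuous h →
      IntervalIntegrable (fun t => t ^ α • h (t * x)) volume 0 1 := fun hh =>
    (intervalIntegral.intervalIntegrable_rpow' hα).smul_continuousOn (by fun_prop)
  simp only [weightedPrimitive, Pi.add_apply, smul_add]
  rw [intervalIntegral.integral_add (h_int hf) (h_int hg), smul_add]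

lemma weightedPrimitive_smul (α c : ℝ) (g : ℝ → F) :
    weightedPrimitive α (c • g) = c • weightedPrimitive α g := by
  ext x
  simp only [weightedPrimitive, Pi.smul_apply, smul_comm _ c, intervalIntegral.integral_smul]

lemma continuousOn_weightedPrimitive (hα : -1 < α) (hg : ContinuousOn g (Icc 0 R)) :
    ContinuousOn (weightedPrimitive α g) (Icc 0 R) := by
  obtain ⟨C, hC⟩ := isCompact_Icc.exists_bound_of_continuousOn hg
  have h_mem : ∀ y ∈ Icc 0 R, ∀ t ∈ Ioc (0 : ℝ) 1, t * y ∈ Icc 0 R := fun y hy t ht =>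
    ⟨mul_nonneg ht.1.le hy.1, (mul_le_of_le_one_left hy.1 ht.2).trans hy.2⟩
  refine continuousOn_id.smul fun x hx => ?_
  refine intervalIntegral.continuousWithinAt_of_dominated_interval
    (bound := fun t => |t ^ α| * C) ?_ ?_ ?_ ?_
  · filter_upwards [self_mem_nhdsWithin] with y hy
    rw [uIoc_of_le zero_le_one]
    refine ContinuousOn.aestronglyMeasurable (.smul ?_ ?_) measurableSet_Ioc
    · exact continuousOn_id.rpow_const fun t ht => .inl ht.1.ne'
    · exact hg.comp (by fun_prop) (h_mem y hy)
  · filter_upwards [self_mem_nhdsWithin] with y hy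
    refine .of_forall fun t ht => ?_
    rw [uIoc_of_le zero_le_one] at ht
    rw [norm_smul, Real.norm_eq_abs]
    gcongr
    exact hC _ (h_mem y hy t ht)
  · exact (intervalIntegral.intervalIntegrable_rpow' hα).norm.mul_const C
  · refine .of_forall fun t ht => ?_
    rw [uIoc_of_le zero_le_one] at ht
    exact ((hg.comp (by fun_prop) fun y hy => h_mem y hy t ht) x hx).const_smul (t ^ α)

lemma hasDerivWithinAt_weightedPrimitive_zero [CompleteSpace F] (hR : 0 < R)
    (hg : ContinuousOn g (Icc 0 R)) :
    HasDerivWithinAt (weightedPrimitive 0 g) (g 0) (Ici 0) 0 := by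
  have h_eq : weightedPrimitive 0 g = fun x => ∫ s in (0 : ℝ)..x, g s := by
    ext x
    simp [weightedPrimitive]
  have h_cont : ContinuousOn g (Ioo 0 R) := hg.mono Ioo_subset_Icc_self
  have h_meas : StronglyMeasurableAtFilter g (𝓝[>] 0) :=
    ⟨Ioo 0 R, Ioo_mem_nhdsGT hR, h_cont.aestronglyMeasurable measurableSet_Ioo⟩
  rw [h_eq]
  exact intervalIntegral.integral_hasDerivWithinAt_right .refl h_meas
    ((hg 0 (left_mem_Icc.2 hR.le)).mono_of_mem_nhdsWithin (Icc_mem_nhdsGT hR))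

lemma norm_weightedPrimitive_le (hα : -1 < α) {c : ℝ} {m : ℕ} (hx : 0 ≤ x)
    (hg : ∀ s ∈ Icc 0 x, ‖g s‖ ≤ c * s ^ m) :
    ‖weightedPrimitive α g x‖ ≤ c / (α + m + 1) * x ^ (m + 1) := by
  have hαm : -1 < α + m := by linarith [m.cast_nonneg (α := ℝ)]
  have h_pointwise : ∀ t ∈ Ioc (0 : ℝ) 1, ‖t ^ α • g (t * x)‖ ≤ c * x ^ m * t ^ (α + m) := by
    intro t ht
    have htx : t * x ∈ Icc 0 x := ⟨mul_nonneg ht.1.le hx, mul_le_of_le_one_left hx ht.2⟩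
    calc ‖t ^ α • g (t * x)‖ = t ^ α * ‖g (t * x)‖ := by
          rw [norm_smul, Real.norm_of_nonneg (Real.rpow_nonneg ht.1.le α)]
      _ ≤ t ^ α * (c * (t * x) ^ m) := by gcongr; exacts [Real.rpow_nonneg ht.1.le α, hg _ htx]
      _ = c * x ^ m * t ^ (α + m) := by rw [Real.rpow_add_natCast ht.1.ne', mul_pow]; ring
  have h_integral : ‖∫ t in (0 : ℝ)..1, t ^ α • g (t * x)‖ ≤ c * x ^ m / (α + m + 1) :=
    calc ‖∫ t in (0 : ℝ)..1, t ^ α • g (t * x)‖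
        ≤ ∫ t in (0 : ℝ)..1, c * x ^ m * t ^ (α + m) :=
          intervalIntegral.norm_integral_le_of_norm_le zero_le_one (.of_forall h_pointwise)
            ((intervalIntegral.intervalIntegrable_rpow' hαm).const_mul _)
      _ = c * x ^ m / (α + m + 1) := by
          rw [intervalIntegral.integral_const_mul, integral_rpow (.inl hαm), Real.one_rpow,
            Real.zero_rpow (by linarith), sub_zero, mul_one_div]
  calc ‖weightedPrimitive α g x‖ = x * ‖∫ t in (0 : ℝ)..1, t ^ α • g (t * x)‖ := by
        rw [weightedPrimitive, norm_smul, Real.norm_of_nonneg hx]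
    _ ≤ x * (c * x ^ m / (α + m + 1)) := by gcongr
    _ = c / (α + m + 1) * x ^ (m + 1) := by ring

end WeightedPrimitive

section WeightedPrimitiveCLM

open scoped unitInterval

variable {F : Type*} [NormedAddCommGroup F] [NormedSpace ℝ F] {α : ℝ}

lemma norm_weightedPrimitive_IccExtend_le (hα : -1 < α) {f : C(I, F)} {c : ℝ} {m : ℕ}
    (hf : ∀ t : I, ‖f t‖ ≤ c * (t : ℝ) ^ m) (τ : I) :
    ‖weightedPrimitive α (f.IccExtend zero_le_one) τ‖ ≤ c / (α + m + 1) * (τ : ℝ) ^ (m + 1) := by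
  refine norm_weightedPrimitive_le hα τ.2.1 fun s hs => ?_
  have hs' : s ∈ I := ⟨hs.1, hs.2.trans τ.2.2⟩
  rw [ContinuousMap.coe_IccExtend, IccExtend_of_mem _ _ hs']
  exact hf ⟨s, hs'⟩

/-- `weightedPrimitive` as a bounded operator on continuous functions on the unit interval. -/
noncomputable def weightedPrimitiveCLM (F : Type*) [NormedAddCommGroup F] [NormedSpace ℝ F]
    (hα : -1 < α) : C(I, F) →L[ℝ] C(I, F) :=
  LinearMap.mkContinuous
    { toFun := fun f => ⟨fun τ => weightedPrimitive α (f.IccExtend zero_le_one) τ,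
        (continuousOn_weightedPrimitive hα (map_continuous _).continuousOn).comp_continuous
          continuous_subtype_val Subtype.prop⟩
      map_add' := fun f g => ContinuousMap.ext fun τ =>
        congrFun (weightedPrimitive_add hα (map_continuous (f.IccExtend zero_le_one))
          (map_continuous (g.IccExtend zero_le_one))) τ
      map_smul' := fun c f => ContinuousMap.ext fun τ =>
        congrFun (weightedPrimitive_smul α c (f.IccExtend zero_le_one)) τ }
    (1 / (α + 1)) fun f => by
      have hα' : 0 < α + 1 := by linarith
      refine (ContinuousMap.norm_le _ (by positivity)).2 fun τ => ?_
      have h_le := norm_weightedPrimitive_IccExtend_le hα (m := 0)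
        (fun t => by simpa using f.norm_coe_le_norm t) τ
      calc ‖weightedPrimitive α (f.IccExtend zero_le_one) τ‖ ≤ ‖f‖ / (α + 1) * τ := by
            simpa using h_le
        _ ≤ ‖f‖ / (α + 1) := mul_le_of_le_one_right (by positivity) τ.2.2
        _ = 1 / (α + 1) * ‖f‖ := by ring

lemma weightedPrimitiveCLM_apply (hα : -1 < α) (f : C(I, F)) (τ : I) :
    weightedPrimitiveCLM F hα f τ = weightedPrimitive α (f.IccExtend zero_le_one) τ :=
  rfl

lemma norm_weightedPrimitiveCLM_apply_le (hα : -1 < α) {f : C(I, F)} {c : ℝ} {m : ℕ}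
    (hf : ∀ t : I, ‖f t‖ ≤ c * (t : ℝ) ^ m) (τ : I) :
    ‖weightedPrimitiveCLM F hα f τ‖ ≤ c / (α + m + 1) * (τ : ℝ) ^ (m + 1) :=
  norm_weightedPrimitive_IccExtend_le hα hf τ

lemma smul_weightedPrimitiveCLM_apply (hα : -1 < α) {f : C(I, F)} {g : ℝ → F} {x : ℝ}
    (hfg : ∀ t : I, f t = g (t * x)) (τ : I) :
    x • weightedPrimitiveCLM F hα f τ = weightedPrimitive α g (τ * x) := by
  rw [weightedPrimitiveCLM_apply, weightedPrimitive, weightedPrimitive, smul_smul, mul_comm x]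
  congr 1
  refine intervalIntegral.integral_congr fun t ht => ?_
  rw [uIcc_of_le zero_le_one] at ht
  have htτ : t * τ ∈ I := unitInterval.mul_mem ht τ.2
  rw [ContinuousMap.coe_IccExtend, IccExtend_of_mem _ _ htτ, hfg, mul_assoc]

end WeightedPrimitiveCLM

section RingInverse

variable {R : Type*} [NormedRing R] [CompleteSpace R]

lemma isUnit_one_sub_of_norm_pow_le {T : R} {c : ℝ}
    (hT : ∀ n : ℕ, ‖T ^ n‖ ≤ c ^ n / n.factorial) : IsUnit (1 - T) := by
  have h_summable : Summable (T ^ ·) := .of_norm_bounded (Real.summable_pow_div_factorial c) hT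
  exact ⟨⟨_, _, h_summable.one_sub_mul_tsum_pow, h_summable.tsum_pow_mul_one_sub⟩, rfl⟩

lemma contDiff_ringInverse_comp [NormedAlgebra ℝ R] {V : Type*} [NormedAddCommGroup V]
    [NormedSpace ℝ V] {f : V → R} {n : WithTop ℕ∞} (hf : ContDiff ℝ n f)
    (h_unit : ∀ v, IsUnit (f v)) : ContDiff ℝ n fun v => Ring.inverse (f v) := by
  refine contDiff_iff_contDiffAt.2 fun v => ?_
  obtain ⟨u, hu⟩ := h_unit v
  have h_inv := contDiffAt_ringInverse (n := n) ℝ u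
  rw [hu] at h_inv
  exact h_inv.comp v hf.contDiffAt

end RingInverse

section Volterra

open scoped unitInterval

variable {𝔸 : Type*} [NormedRing 𝔸] [NormedAlgebra ℝ 𝔸] {α : ℝ} (hα : -1 < α)

/-- The operator `f ↦ Q₀ (Q_α (β f))`, linear in `β`, where `Q_α` is `weightedPrimitiveCLM`. The
function `Q₀ (Q_α g)` is the solution `y` of `y'' + (α / x) y' = g` with `y 0 = y' 0 = 0`. -/
noncomputable def volterraOperator (hα : -1 < α) :
    C(I, 𝔸) →L[ℝ] C(I, 𝔸) →L[ℝ] C(I, 𝔸) :=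
  ContinuousLinearMap.compL ℝ C(I, 𝔸) C(I, 𝔸) C(I, 𝔸)
      (weightedPrimitiveCLM 𝔸 neg_one_lt_zero ∘L weightedPrimitiveCLM 𝔸 hα) ∘L
    ContinuousLinearMap.mul ℝ C(I, 𝔸)

lemma volterraOperator_apply (β f : C(I, 𝔸)) :
    volterraOperator hα β f =
      weightedPrimitiveCLM 𝔸 neg_one_lt_zero (weightedPrimitiveCLM 𝔸 hα (β * f)) :=
  rfl

lemma sq_smul_volterraOperator_apply {β f : C(I, 𝔸)} {g : ℝ → 𝔸} {x : ℝ}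
    (hg : ∀ t : I, β t * f t = g (t * x)) (τ : I) :
    x ^ 2 • volterraOperator hα β f τ =
      weightedPrimitive 0 (weightedPrimitive α g) (τ * x) := by
  have h_inner : ∀ t, (x • weightedPrimitiveCLM 𝔸 hα (β * f)) t = weightedPrimitive α g (t * x) :=
    smul_weightedPrimitiveCLM_apply hα hg
  rw [← smul_weightedPrimitiveCLM_apply neg_one_lt_zero h_inner, map_smul,
    volterraOperator_apply, ContinuousMap.smul_apply, smul_smul, sq]

lemma norm_volterraOperator_apply_le {β f : C(I, 𝔸)} {c : ℝ} {m : ℕ}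
    (hf : ∀ t : I, ‖f t‖ ≤ c * (t : ℝ) ^ m) (τ : I) :
    ‖volterraOperator hα β f τ‖ ≤ ‖β‖ * c / (α + m + 1) / (m + 2) * (τ : ℝ) ^ (m + 2) := by
  have h_mul : ∀ t : I, ‖(β * f) t‖ ≤ ‖β‖ * c * (t : ℝ) ^ m := fun t =>
    calc ‖(β * f) t‖ ≤ ‖β t‖ * ‖f t‖ := norm_mul_le _ _
      _ ≤ ‖β‖ * (c * (t : ℝ) ^ m) := by gcongr; exacts [β.norm_coe_le_norm t, hf t]
      _ = ‖β‖ * c * (t : ℝ) ^ m := by ring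
  have h_le := norm_weightedPrimitiveCLM_apply_le neg_one_lt_zero
    (norm_weightedPrimitiveCLM_apply_le hα h_mul) τ
  rw [volterraOperator_apply]
  convert h_le using 3
  push_cast
  ring

lemma norm_volterraOperator_pow_apply_le (β f : C(I, 𝔸)) (n : ℕ) (τ : I) :
    ‖(volterraOperator hα β ^ n) f τ‖ ≤
      (‖β‖ / (α + 1)) ^ n / n.factorial * ‖f‖ * (τ : ℝ) ^ n := by
  have hα' : 0 < α + 1 := by linarith
  induction n generalizing τ with
  | zero => simpa using f.norm_coe_le_norm τ
  | succ n ih =>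
    set c := (‖β‖ / (α + 1)) ^ n / n.factorial * ‖f‖ with hc
    rw [pow_succ', mul_apply_eq_comp]
    calc ‖volterraOperator hα β ((volterraOperator hα β ^ n) f) τ‖
        ≤ ‖β‖ * c / (α + n + 1) / (n + 2) * (τ : ℝ) ^ (n + 2) :=
          norm_volterraOperator_apply_le hα ih τ
      _ ≤ ‖β‖ * c / (α + 1) / (n + 1) * (τ : ℝ) ^ (n + 1) := by
          have hτ : (τ : ℝ) ^ (n + 2) ≤ (τ : ℝ) ^ (n + 1) :=
            pow_le_pow_of_le_one τ.2.1 τ.2.2 (by lia)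
          have hτ₀ : 0 ≤ (τ : ℝ) ^ (n + 2) := pow_nonneg τ.2.1 _
          gcongr <;> linarith [n.cast_nonneg (α := ℝ)]
      _ = (‖β‖ / (α + 1)) ^ (n + 1) / (n + 1).factorial * ‖f‖ * (τ : ℝ) ^ (n + 1) := by
          rw [hc, Nat.factorial_succ, pow_succ (‖β‖ / (α + 1)) n]
          push_cast
          field_simp

variable [CompleteSpace 𝔸]

lemma isUnit_one_sub_volterraOperator (β : C(I, 𝔸)) : IsUnit (1 - volterraOperator hα β) := by
  have hα' : 0 < α + 1 := by linarith
  have h_norm : ∀ n, ‖volterraOperator hα β ^ n‖ ≤ (‖β‖ / (α + 1)) ^ n / n.factorial :=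
    fun n => ContinuousLinearMap.opNorm_le_bound _ (by positivity) fun f =>
      (ContinuousMap.norm_le _ (by positivity)).2 fun τ =>
        (norm_volterraOperator_pow_apply_le hα β f n τ).trans
          (mul_le_of_le_one_right (by positivity) (pow_le_one₀ τ.2.1 τ.2.2))
  exact isUnit_one_sub_of_norm_pow_le (R := C(I, 𝔸) →L[ℝ] C(I, 𝔸)) h_norm

/-- The solution `y` on `[0, 1]` of `y'' + (α / x) y' = β y` with `y 0 = 1` and `y' 0 = 0`, in the
integral form `y = 1 + volterraOperator hα β y`. -/
noncomputable def volterraSolution (hα : -1 < α) (β : C(I, 𝔸)) : C(I, 𝔸) :=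
  Ring.inverse (1 - volterraOperator hα β) 1

lemma eq_volterraSolution_iff {β y : C(I, 𝔸)} :
    y = volterraSolution hα β ↔ y = 1 + volterraOperator hα β y := by
  have h_unit := isUnit_one_sub_volterraOperator hα β
  rw [← sub_eq_iff_eq_add, volterraSolution]
  constructor
  · rintro rfl
    exact DFunLike.congr_fun (Ring.mul_inverse_cancel _ h_unit) 1
  · intro hy
    rw [← hy]
    exact (DFunLike.congr_fun (Ring.inverse_mul_cancel _ h_unit) y).symm

lemma volterraSolution_apply (β : C(I, 𝔸)) (τ : I) :
    volterraSolution hα β τ = 1 + volterraOperator hα β (volterraSolution hα β) τ :=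
  DFunLike.congr_fun ((eq_volterraSolution_iff hα).1 rfl) τ

lemma volterraSolution_comp_mulRight (β : C(I, 𝔸)) (s : I) :
    (volterraSolution hα β).comp (.mulRight s) =
      volterraSolution hα ((s : ℝ) ^ 2 • β.comp (.mulRight s)) := by
  refine (eq_volterraSolution_iff hα).2 (ContinuousMap.ext fun τ => ?_)
  set y := volterraSolution hα β
  set g := (β * y).IccExtend (zero_le_one (α := ℝ))
  have hg : ∀ t : I, β t * y t = g t := fun t => (IccExtend_val _ (β * y) t).symm
  have h_left : volterraOperator hα β y (τ * s) =
      weightedPrimitive 0 (weightedPrimitive α g) (τ * s) := by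
    have h_one := sq_smul_volterraOperator_apply hα (x := 1) (g := g) (by simpa using hg) (τ * s)
    rwa [one_pow, one_smul, mul_one] at h_one
  have h_right : (s : ℝ) ^ 2 • volterraOperator hα (β.comp (.mulRight s))
      (y.comp (.mulRight s)) τ = weightedPrimitive 0 (weightedPrimitive α g) (τ * s) :=
    sq_smul_volterraOperator_apply hα (fun t => hg (t * s)) τ
  rw [map_smul]
  exact (volterraSolution_apply hα β (τ * s)).trans (congrArg _ (h_left.trans h_right.symm))

lemma contDiff_volterraSolution (n : WithTop ℕ∞) :
    ContDiff ℝ n (volterraSolution hα : C(I, 𝔸) → C(I, 𝔸)) := by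
  have h_sub : ContDiff ℝ n fun β : C(I, 𝔸) => 1 - volterraOperator hα β :=
    contDiff_const.sub (ContinuousLinearMap.contDiff (𝕜 := ℝ) (E := C(I, 𝔸))
      (F := C(I, 𝔸) →L[ℝ] C(I, 𝔸)) (volterraOperator hα))
  exact (contDiff_ringInverse_comp (R := C(I, 𝔸) →L[ℝ] C(I, 𝔸)) h_sub
    (isUnit_one_sub_volterraOperator hα)).clm_apply contDiff_const

end Volterra

section HalfOpenInterval

/-- The intervals `[0, L)` with `0 < L ≤ ∞`. -/
def IsHalfOpenInterval (J : Set ℝ) : Prop :=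
  (∃ L : ℝ, 0 < L ∧ J = Ico 0 L) ∨ J = Ici 0

namespace IsHalfOpenInterval

variable {J : Set ℝ}

lemma convex (hJ : IsHalfOpenInterval J) : Convex ℝ J := by
  rcases hJ with ⟨L, -, rfl⟩ | rfl
  exacts [convex_Ico 0 L, convex_Ici 0]

lemma zero_mem (hJ : IsHalfOpenInterval J) : 0 ∈ J := by
  rcases hJ with ⟨L, hL, rfl⟩ | rfl
  exacts [left_mem_Ico.2 hL, self_mem_Ici]

lemma exists_Icc_subset (hJ : IsHalfOpenInterval J) {x : ℝ} (hx : x ∈ J) :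
    ∃ R > x, Icc 0 R ⊆ J := by
  rcases hJ with ⟨L, -, rfl⟩ | rfl
  · obtain ⟨R, hxR, hRL⟩ := exists_between hx.2
    exact ⟨R, hxR, Icc_subset_Ico_right hRL⟩
  · exact ⟨x + 1, lt_add_one x, Icc_subset_Ici_self⟩

lemma interior_nonempty (hJ : IsHalfOpenInterval J) : (interior J).Nonempty := by
  obtain ⟨R, hR, h_sub⟩ := hJ.exists_Icc_subset hJ.zero_mem
  exact (nonempty_Ioo.2 hR).mono (interior_maximal (Ioo_subset_Icc_self.trans h_sub) isOpen_Ioo)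

end IsHalfOpenInterval

end HalfOpenInterval

lemma deriv_deriv_rpow_smul {F : Type*} [NormedAddCommGroup F] [NormedSpace ℝ F] {w v : ℝ → F}
    {g : F} {x ρ : ℝ} (hx : 0 < x) (hw : ∀ᶠ t in 𝓝 x, HasDerivAt w (v t) t)
    (hv : HasDerivAt v (g - (2 * ρ / x) • v x) x) :
    deriv (deriv fun t => t ^ ρ • w t) x =
      (ρ * (ρ - 1) * (x ^ 2)⁻¹) • x ^ ρ • w x + x ^ ρ • g := by
  have h_rpow : ∀ t > (0 : ℝ), ∀ q : ℝ, HasDerivAt (fun t : ℝ => t ^ q) (q * t ^ (q - 1)) t :=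
    fun t ht q => Real.hasDerivAt_rpow_const (.inl ht.ne')
  have h_first : deriv (fun t => t ^ ρ • w t) =ᶠ[𝓝 x]
      fun t => t ^ ρ • v t + (ρ * t ^ (ρ - 1)) • w t := by
    filter_upwards [hw, eventually_gt_nhds hx] with t hwt ht
    exact ((h_rpow t ht ρ).smul hwt).deriv
  have h_second := ((h_rpow x hx ρ).smul hv).add
    (((h_rpow x hx (ρ - 1)).const_mul ρ).smul hw.self_of_nhds)
  rw [h_first.deriv_eq]
  refine h_second.deriv.trans ?_
  rw [Real.rpow_sub_one hx.ne' (ρ - 1), Real.rpow_sub_one hx.ne' ρ]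
  match_scalars <;> field_simp
  ring

section Frobenius

open scoped unitInterval

variable {𝔸 : Type*} [NormedRing 𝔸] [NormedAlgebra ℝ 𝔸] [CompleteSpace 𝔸]
  {E : Type*} [NormedAddCommGroup E] [NormedSpace ℝ E] {α : ℝ} (hα : -1 < α)

/-- The segment `t ↦ (t x, z)` from `(0, z)` to `(x, z)`, as a bounded linear function of
`(x, z)`. -/
noncomputable def horizontalSegment (E : Type*) [NormedAddCommGroup E] [NormedSpace ℝ E] :
    ℝ × E →L[ℝ] C(I, ℝ × E) :=
  LinearMap.mkContinuous
    { toFun := fun p => ⟨fun t => (t * p.1, p.2), by fun_prop⟩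
      map_add' := fun p q => by ext t <;> simp [mul_add]
      map_smul' := fun c p => by ext t <;> simp [mul_left_comm] }
    1 fun p => by
      rw [one_mul]
      refine (ContinuousMap.norm_le _ (norm_nonneg p)).2 fun t => ?_
      refine norm_prod_le_iff.2 ⟨?_, norm_snd_le p⟩
      calc ‖(t : ℝ) * p.1‖ = t * ‖p.1‖ := by rw [norm_mul, Real.norm_of_nonneg t.2.1]
        _ ≤ ‖p.1‖ := mul_le_of_le_one_left (norm_nonneg _) t.2.2
        _ ≤ ‖p‖ := norm_fst_le p

lemma horizontalSegment_apply (p : ℝ × E) (t : I) :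
    horizontalSegment E p t = (t * p.1, p.2) :=
  rfl

/-- The solution `w` of `∂ₓ²w + (α / x) ∂ₓw = b w` with `w (0, z) = 1` and `∂ₓw (0, z) = 0`. Its
value at `(x, z)` is obtained by rescaling `[0, x]` to the unit interval, which multiplies `b` by
`x²`. -/
noncomputable def frobeniusFactor (hα : -1 < α) (b : ℝ × E → 𝔸) (p : ℝ × E) : 𝔸 :=
  volterraSolution hα (p.1 ^ 2 • superposition b (horizontalSegment E p)) 1

variable {b : ℝ × E → 𝔸} {S : Set (ℝ × E)}

lemma volterraSolution_superposition_apply (hb : ContinuousOn b S) {p : ℝ × E}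
    (hp : horizontalSegment E p ∈ mapsInto I S) (t : I) :
    volterraSolution hα (p.1 ^ 2 • superposition b (horizontalSegment E p)) t =
      frobeniusFactor hα b (t * p.1, p.2) := by
  have h_assoc : ∀ τ : I, horizontalSegment E (t * p.1, p.2) τ = horizontalSegment E p (τ * t) :=
    fun τ => Prod.ext (mul_assoc _ _ _).symm rfl
  have hp_t : horizontalSegment E (t * p.1, p.2) ∈ mapsInto I S :=
    fun τ => h_assoc τ ▸ hp (τ * t)
  have h_scale : (t * p.1) ^ 2 • superposition b (horizontalSegment E (t * p.1, p.2)) =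
      (t : ℝ) ^ 2 •
        (p.1 ^ 2 • superposition b (horizontalSegment E p)).comp (.mulRight t) := by
    ext τ
    rw [ContinuousMap.smul_apply, superposition_apply hb hp_t, h_assoc,
      ← superposition_apply hb hp, mul_pow, mul_smul]
    rfl
  rw [frobeniusFactor, h_scale, ← volterraSolution_comp_mulRight]
  exact congrArg _ (one_mul t).symm

lemma frobeniusFactor_eq_one_add_weightedPrimitive (hb : ContinuousOn b S) {x : ℝ} {z : E}
    (hxz : horizontalSegment E (x, z) ∈ mapsInto I S) :
    frobeniusFactor hα b (x, z) = 1 + weightedPrimitive 0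
      (weightedPrimitive α fun s => b (s, z) * frobeniusFactor hα b (s, z)) x := by
  set y := volterraSolution hα (x ^ 2 • superposition b (horizontalSegment E (x, z))) with hy
  set g := fun s => b (s, z) * frobeniusFactor hα b (s, z)
  have h_mul : ∀ t : I, superposition b (horizontalSegment E (x, z)) t * y t = g (t * x) := by
    intro t
    rw [superposition_apply hb hxz, hy, volterraSolution_superposition_apply hα hb hxz,
      horizontalSegment_apply]
  have h_one := sq_smul_volterraOperator_apply hα (g := g) h_mul 1
  rw [Icc.coe_one, one_mul] at h_one
  rw [← h_one, frobeniusFactor, volterraSolution_apply, map_smul]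
  rfl

lemma contDiffOn_frobeniusFactor_of_convex (hS : Convex ℝ S) (hS' : (interior S).Nonempty)
    (h_seg : MapsTo (horizontalSegment E) S (mapsInto I S)) {n : ℕ} (hb : ContDiffOn ℝ n b S) :
    ContDiffOn ℝ n (frobeniusFactor hα b) S := by
  have h_super : ContDiffOn ℝ n (fun p => superposition b (horizontalSegment E p)) S :=
    (contDiffOn_superposition hS hS' n hb).comp (horizontalSegment E).contDiff.contDiffOn h_seg
  have h_coeff : ContDiffOn ℝ n
      (fun p : ℝ × E => p.1 ^ 2 • superposition b (horizontalSegment E p)) S :=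
    (contDiff_fst.pow 2).contDiffOn.smul h_super
  exact (ContinuousMap.evalCLM ℝ (1 : I)).contDiff.comp_contDiffOn
    ((contDiff_volterraSolution hα n).comp_contDiffOn h_coeff)

variable {J : Set ℝ} {Z : Set E}

lemma horizontalSegment_mem_mapsInto (hJ : IsHalfOpenInterval J) {p : ℝ × E} (hp : p ∈ J ×ˢ Z) :
    horizontalSegment E p ∈ mapsInto I (J ×ˢ Z) :=
  fun t => ⟨hJ.convex.smul_mem_of_zero_mem hJ.zero_mem hp.1 t.2, hp.2⟩

lemma contDiffOn_frobeniusFactor (hJ : IsHalfOpenInterval J) (hZ : IsOpen Z) {n : ℕ}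
    (hb : ContDiffOn ℝ n b (J ×ˢ Z)) : ContDiffOn ℝ n (frobeniusFactor hα b) (J ×ˢ Z) := by
  intro p hp
  obtain ⟨ε, hε, h_ball⟩ := Metric.isOpen_iff.1 hZ p.2 hp.2
  have h_interior : (interior (J ×ˢ Metric.ball p.2 ε)).Nonempty := by
    rw [interior_prod_eq, Metric.isOpen_ball.interior_eq]
    exact hJ.interior_nonempty.prod ⟨p.2, Metric.mem_ball_self hε⟩
  have h_local : ContDiffOn ℝ n (frobeniusFactor hα b) (J ×ˢ Metric.ball p.2 ε) :=
    contDiffOn_frobeniusFactor_of_convex hα (hJ.convex.prod (convex_ball _ _)) h_interior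
      (fun _ => horizontalSegment_mem_mapsInto hJ) (hb.mono (prod_mono_right h_ball))
  refine (h_local p ⟨hp.1, Metric.mem_ball_self hε⟩).mono_of_mem_nhdsWithin ?_
  rw [nhdsWithin_prod_eq]
  exact prod_mem_prod self_mem_nhdsWithin
    (mem_nhdsWithin_of_mem_nhds (Metric.ball_mem_nhds p.2 hε))

lemma continuousOn_mul_frobeniusFactor (hJ : IsHalfOpenInterval J) (hZ : IsOpen Z)
    (hb : ContinuousOn b (J ×ˢ Z)) {z : E} (hz : z ∈ Z) :
    ContinuousOn (fun s => b (s, z) * frobeniusFactor hα b (s, z)) J := by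
  have h_factor : ContinuousOn (frobeniusFactor hα b) (J ×ˢ Z) :=
    (contDiffOn_frobeniusFactor hα hJ hZ (n := 0) (contDiffOn_zero.2 hb)).continuousOn
  exact (hb.mul h_factor).comp (f := fun s => (s, z)) (by fun_prop) fun s hs => ⟨hs, hz⟩

lemma frobeniusFactor_zero (hJ : IsHalfOpenInterval J) (hb : ContinuousOn b (J ×ˢ Z)) {z : E}
    (hz : z ∈ Z) : frobeniusFactor hα b (0, z) = 1 := by
  rw [frobeniusFactor_eq_one_add_weightedPrimitive hα hb
    (horizontalSegment_mem_mapsInto hJ ⟨hJ.zero_mem, hz⟩), weightedPrimitive, zero_smul, add_zero]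

lemma derivWithin_frobeniusFactor_zero (hJ : IsHalfOpenInterval J) (hZ : IsOpen Z)
    (hb : ContinuousOn b (J ×ˢ Z)) {z : E} (hz : z ∈ Z) :
    derivWithin (fun x => frobeniusFactor hα b (x, z)) (Ici 0) 0 = 0 := by
  obtain ⟨R, hR, h_sub⟩ := hJ.exists_Icc_subset hJ.zero_mem
  set g := fun s => b (s, z) * frobeniusFactor hα b (s, z)
  have hg : ContinuousOn g (Icc 0 R) := (continuousOn_mul_frobeniusFactor hα hJ hZ hb hz).mono h_sub
  have h_eq : ∀ x ∈ J, frobeniusFactor hα b (x, z) =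
      1 + weightedPrimitive 0 (weightedPrimitive α g) x := fun x hx =>
    frobeniusFactor_eq_one_add_weightedPrimitive hα hb
      (horizontalSegment_mem_mapsInto hJ ⟨hx, hz⟩)
  have h_deriv : HasDerivWithinAt (fun x => 1 + weightedPrimitive 0 (weightedPrimitive α g) x)
      (weightedPrimitive α g 0) (Ici 0) 0 :=
    (hasDerivWithinAt_weightedPrimitive_zero hR
      (continuousOn_weightedPrimitive hα hg)).const_add 1
  have h_eventually : (fun x => frobeniusFactor hα b (x, z)) =ᶠ[𝓝[≥] 0]
      fun x => 1 + weightedPrimitive 0 (weightedPrimitive α g) x := by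
    filter_upwards [Icc_mem_nhdsGE hR] with x hx using h_eq x (h_sub hx)
  rw [(h_deriv.congr_of_eventuallyEq h_eventually (h_eq 0 hJ.zero_mem)).derivWithin
    (uniqueDiffOn_Ici 0 0 self_mem_Ici), weightedPrimitive, zero_smul]

lemma deriv_deriv_rpow_smul_frobeniusFactor {ρ : ℝ} (hρ : -1 < 2 * ρ)
    (hJ : IsHalfOpenInterval J) (hZ : IsOpen Z) (hb : ContinuousOn b (J ×ˢ Z)) {x : ℝ} {z : E}
    (hx : x ∈ J) (hx₀ : 0 < x) (hz : z ∈ Z) :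
    deriv (deriv fun t => t ^ ρ • frobeniusFactor hρ b (t, z)) x =
      (ρ * (ρ - 1) * (x ^ 2)⁻¹) • x ^ ρ • frobeniusFactor hρ b (x, z) +
        b (x, z) * x ^ ρ • frobeniusFactor hρ b (x, z) := by
  obtain ⟨R, hxR, h_sub⟩ := hJ.exists_Icc_subset hx
  set g := fun s => b (s, z) * frobeniusFactor hρ b (s, z)
  have hg : ContinuousOn g (Icc 0 R) := (continuousOn_mul_frobeniusFactor hρ hJ hZ hb hz).mono h_sub
  have h_deriv : ∀ t ∈ Ioo 0 R,
      HasDerivAt (fun t => frobeniusFactor hρ b (t, z)) (weightedPrimitive (2 * ρ) g t) t := by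
    intro t ht
    have h_int := (hasDerivAt_weightedPrimitive neg_one_lt_zero
      (continuousOn_weightedPrimitive hρ hg) ht).const_add (1 : 𝔸)
    rw [zero_div, zero_smul, sub_zero] at h_int
    refine h_int.congr_of_eventuallyEq ?_
    filter_upwards [Icc_mem_nhds ht.1 ht.2] with s hs
    exact frobeniusFactor_eq_one_add_weightedPrimitive hρ hb
      (horizontalSegment_mem_mapsInto hJ ⟨h_sub hs, hz⟩)
  rw [mul_smul_comm]
  exact deriv_deriv_rpow_smul hx₀ (mem_of_superset (Ioo_mem_nhds hx₀ hxR) h_deriv)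
    (hasDerivAt_weightedPrimitive hρ hg ⟨hx₀, hxR⟩)

end Frobenius

theorem frobenius_existence_with_parameter_general {𝔸 E : Type*} [NormedRing 𝔸]
    [NormedAlgebra ℝ 𝔸] [CompleteSpace 𝔸] [NormedAddCommGroup E] [NormedSpace ℝ E] {ν h : ℝ}
    (hν : -1 < ν) (hh : h ≠ 0) {J : Set ℝ} (hJ : IsHalfOpenInterval J) {Z : Set E}
    (hZ : IsOpen Z) {B : ℝ → E → 𝔸} (hB : ContinuousOn (fun p : ℝ × E => B p.1 p.2) (J ×ˢ Z)) :
    ∃ w : ℝ → E → 𝔸,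
      (∀ n : ℕ, ContDiffOn ℝ n (fun p : ℝ × E => B p.1 p.2) (J ×ˢ Z) →
        ContDiffOn ℝ n (fun p : ℝ × E => w p.1 p.2) (J ×ˢ Z)) ∧
      ∀ z ∈ Z, w 0 z = 1 ∧ derivWithin (fun x : ℝ => w x z) (Ici 0) 0 = 0 ∧
        ∀ x ∈ J, 0 < x →
          -(h ^ 2) • deriv (deriv fun t : ℝ => t ^ (1 / 2 + ν) • w t z) x
            + (h ^ 2 * (ν ^ 2 - 1 / 4) * (x ^ 2)⁻¹) • x ^ (1 / 2 + ν) • w x z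
            + B x z * x ^ (1 / 2 + ν) • w x z = 0 := by
  set b : ℝ × E → 𝔸 := fun p => (h ^ 2)⁻¹ • B p.1 p.2
  have hb : ContinuousOn b (J ×ˢ Z) := hB.const_smul (h ^ 2)⁻¹
  have hα : -1 < 2 * (1 / 2 + ν) := by linarith
  refine ⟨fun x z => frobeniusFactor hα b (x, z), fun n hBn => ?_, fun z hz => ⟨?_, ?_, ?_⟩⟩
  · exact contDiffOn_frobeniusFactor hα hJ hZ (hBn.const_smul (h ^ 2)⁻¹)
  · exact frobeniusFactor_zero hα hJ hb hz
  · exact derivWithin_frobeniusFactor_zero hα hJ hZ hb hz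
  · intro x hx hx₀
    rw [deriv_deriv_rpow_smul_frobeniusFactor hα hJ hZ hb hx hx₀ hz, smul_mul_assoc]
    match_scalars <;> field_simp <;> ring

theorem frobenius_existence_with_parameter
    (ν h : ℝ) (hν : 0 < ν) (hh : 0 < h)
    -- I = [0, L) with 0 < L ≤ ∞
    (I : Set ℝ) (hI : (∃ L : ℝ, 0 < L ∧ I = Set.Ico 0 L) ∨ I = Set.Ici 0)
    -- Z is a connected open interval
    (Z : Set ℝ) (hZopen : IsOpen Z) (hZconn : IsPreconnected Z)
    (B : ℝ → ℝ → ℝ)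
    (hB : ∀ n : ℕ, ContDiffOn ℝ n (fun p : ℝ × ℝ => B p.1 p.2) (I ×ˢ Z)) :
    ∃ w : ℝ → ℝ → ℝ,
      (∀ n : ℕ, ContDiffOn ℝ n (fun p : ℝ × ℝ => w p.1 p.2) (I ×ˢ Z)) ∧
      ∀ z ∈ Z, w 0 z = 1 ∧ derivWithin (fun x : ℝ => w x z) (Set.Ici 0) 0 = 0 ∧
        ∀ x ∈ I, 0 < x →
          -(h ^ 2) * deriv (deriv (fun t : ℝ => t ^ ((1:ℝ)/2 + ν) * w t z)) x
            + h ^ 2 * (ν ^ 2 - 1/4) * (x ^ 2)⁻¹ * (x ^ ((1:ℝ)/2 + ν) * w x z)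
            + B x z * (x ^ ((1:ℝ)/2 + ν) * w x z) = 0 := by
  obtain ⟨w, h_smooth, h_sol⟩ := frobenius_existence_with_parameter_general
    (neg_one_lt_zero.trans hν) hh.ne' hI hZopen (hB 0).continuousOn
  exact ⟨w, fun n => h_smooth n (hB n), h_sol⟩
end
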